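/- arXiv:2001.01933 — 2 statements merged into one kernel-verified Lean document; each statement's English description precedes it below -/
import Mathlib

section
/- Fix a real constant 0 < c < 1. There exists a constant q = q(c) > 0 such that the following holds for n ranging over values with cn ∈ ℕ, t = cn and t' = t − 1: if p_n = 1 − exp(−α(c)/(1−c) − q·(log n)/((1−c)n)) and Δ ∼ RP(n,t,p_n), then the probability that Δ has a complete t'-skeleton tends to 1; if instead p_n = 1 − exp(−α(c)/(1−c) + q·(log n)/((1−c)n)), then the probability that Δ has a complete t'-skeleton tends to 0. -/
open scoped Classical

noncomputable section

/-- The natural-log entropy function `α(c)`. -/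
def entropy (c : ℝ) : ℝ := -c * Real.log c - (1 - c) * Real.log (1 - c)

/-- The simplicial complex generated by a family `F` of facets: all nonempty
subsets of members of `F`. -/
def genComplex {n : ℕ} (F : Finset (Finset (Fin n))) : Finset (Finset (Fin n)) :=
  Finset.univ.filter (fun x => x.Nonempty ∧ ∃ f ∈ F, x ⊆ f)

/-- The probability, under the random pure model `RP(n,t,p)` (each `t`-subset of
`[n]` is taken as a facet independently with probability `p`), of the event `P`
for the generated complex. -/
def rpProb (n t : ℕ) (p : ℝ) (P : Finset (Finset (Fin n)) → Prop) : ℝ :=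
  ∑ F ∈ (Finset.univ.filter (fun s : Finset (Fin n) => s.card = t)).powerset,
    (if P (genComplex F) then p ^ F.card * (1 - p) ^ (Nat.choose n t - F.card) else 0)


/-- Weight of a family in the binomial model. -/
def wt {β : Type*} (U : Finset β) (p : ℝ) (F : Finset β) : ℝ :=
  p ^ F.card * (1 - p) ^ (U.card - F.card)

lemma wt_nonneg {β : Type*} (U : Finset β) {p : ℝ} (h0 : 0 ≤ p) (h1 : p ≤ 1) (F : Finset β) :
    0 ≤ wt U p F := by
  unfold wt
  have : 0 ≤ 1 - p := by linarith
  positivity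

lemma wt_sum {β : Type*} (U : Finset β) (p : ℝ) : ∑ F ∈ U.powerset, wt U p F = 1 := by
  unfold wt
  rw [Finset.sum_pow_mul_eq_add_pow]
  simp

lemma wt_disj {β : Type*} (U S : Finset β) (hS : S ⊆ U) (p : ℝ) :
    ∑ F ∈ U.powerset, wt U p F * (if Disjoint F S then 1 else 0) = (1 - p) ^ S.card := by
  classical
  simp only [mul_ite, mul_one, mul_zero]
  rw [← Finset.sum_filter]
  have h : U.powerset.filter (fun F => Disjoint F S) = (U \ S).powerset := by
    ext F
    simp only [Finset.mem_filter, Finset.mem_powerset, Finset.subset_sdiff]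
  rw [h]
  have h2 : ∀ F ∈ (U \ S).powerset, wt U p F =
      (1 - p) ^ S.card * (p ^ F.card * (1 - p) ^ ((U \ S).card - F.card)) := by
    intro F hF
    have h3 := Finset.card_le_card (Finset.mem_powerset.1 hF)
    have h4 := Finset.card_sdiff_add_card_eq_card hS
    unfold wt
    have : U.card - F.card = S.card + ((U \ S).card - F.card) := by omega
    rw [this, pow_add]
    ring
  rw [Finset.sum_congr rfl h2, ← Finset.mul_sum, Finset.sum_pow_mul_eq_add_pow]
  simp

lemma first_moment {β ι : Type*} (U : Finset β) (I : Finset ι) (S : ι → Finset β)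
    (hS : ∀ i ∈ I, S i ⊆ U) (m : ℕ) (hm : ∀ i ∈ I, (S i).card = m) (p : ℝ)
    (h0 : 0 ≤ p) (h1 : p ≤ 1) (E : Finset β → Prop)
    (hE : ∀ F ∈ U.powerset, (∀ i ∈ I, ¬ Disjoint F (S i)) → E F) :
    1 - I.card * (1 - p) ^ m ≤ ∑ F ∈ U.powerset, (if E F then wt U p F else 0) := by
  have key : ∀ F ∈ U.powerset, wt U p F -
      ∑ i ∈ I, wt U p F * (if Disjoint F (S i) then 1 else 0) ≤ if E F then wt U p F else 0 := by
    intro F hF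
    have hw := wt_nonneg U h0 h1 F
    have hn : ∀ i ∈ I, 0 ≤ wt U p F * (if Disjoint F (S i) then (1:ℝ) else 0) := by
      intro i _
      split_ifs <;> simp [hw]
    split_ifs with h
    · linarith [Finset.sum_nonneg hn]
    · have : ∃ i ∈ I, Disjoint F (S i) := by
        by_contra hcon
        push Not at hcon
        exact h (hE F hF hcon)
      obtain ⟨i, hi, hd⟩ := this
      have := Finset.single_le_sum hn hi
      simp only [hd, if_true, mul_one] at this
      linarith
  have := Finset.sum_le_sum key
  rw [Finset.sum_sub_distrib, wt_sum, Finset.sum_comm] at this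
  rw [Finset.sum_congr rfl (fun i hi => (wt_disj U (S i) (hS i hi) p).trans
    (by rw [hm i hi]))] at this
  simpa using this

lemma second_moment {β ι : Type*} (U : Finset β) (I : Finset ι) (S : ι → Finset β)
    (hS : ∀ i ∈ I, S i ⊆ U) (m : ℕ) (hm : ∀ i ∈ I, (S i).card = m) (p : ℝ)
    (h0 : 0 ≤ p) (h1 : p ≤ 1) (D : ℕ)
    (hD : ∀ i ∈ I, (I.filter (fun j => ¬ Disjoint (S i) (S j))).card ≤ D)
    (E : Finset β → Prop)
    (hE : ∀ F ∈ U.powerset, E F → (∀ i ∈ I, ¬ Disjoint F (S i))) :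
    (∑ F ∈ U.powerset, (if E F then wt U p F else 0)) * (I.card * (1 - p) ^ m) ^ 2
      ≤ D * (I.card * (1 - p) ^ m) := by
  classical
  set μ : ℝ := I.card * (1 - p) ^ m with hμ
  have hr0 : 0 ≤ 1 - p := by linarith
  let d : ι → Finset β → ℝ := fun i F => if Disjoint F (S i) then 1 else 0
  let X : Finset β → ℝ := fun F => ∑ i ∈ I, d i F
  have A : (∑ F ∈ U.powerset, (if E F then wt U p F else 0)) * μ ^ 2 ≤
      ∑ F ∈ U.powerset, wt U p F * (X F - μ) ^ 2 := by
    rw [Finset.sum_mul]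
    apply Finset.sum_le_sum
    intro F hF
    have hw := wt_nonneg U h0 h1 F
    split_ifs with h
    · have : X F = 0 := by
        apply Finset.sum_eq_zero
        intro i hi
        simp [d, hE F hF h i hi]
      rw [this]
      simp
    · rw [zero_mul]
      positivity
  have B : ∑ F ∈ U.powerset, wt U p F * X F = μ := by
    simp only [X, Finset.mul_sum]
    rw [Finset.sum_comm]
    rw [Finset.sum_congr rfl (fun i hi => (wt_disj U (S i) (hS i hi) p).trans
      (by rw [hm i hi]))]
    simp [hμ]
  have C : ∑ F ∈ U.powerset, wt U p F * X F ^ 2 =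
      ∑ i ∈ I, ∑ j ∈ I, (1 - p) ^ (S i ∪ S j).card := by
    have : ∀ F ∈ U.powerset, wt U p F * X F ^ 2 =
        ∑ i ∈ I, ∑ j ∈ I, wt U p F * (if Disjoint F (S i ∪ S j) then 1 else 0) := by
      intro F _
      simp only [X, sq]
      rw [Finset.sum_mul_sum]
      simp only [Finset.mul_sum]
      refine Finset.sum_congr rfl fun i _ => Finset.sum_congr rfl fun j _ => ?_
      congr 1
      simp only [d, Finset.disjoint_union_right]
      by_cases ha : Disjoint F (S i) <;> by_cases hb : Disjoint F (S j) <;> simp [ha, hb]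
    rw [Finset.sum_congr rfl this, Finset.sum_comm]
    refine Finset.sum_congr rfl fun i hi => ?_
    rw [Finset.sum_comm]
    refine Finset.sum_congr rfl fun j hj => ?_
    exact wt_disj U (S i ∪ S j) (Finset.union_subset (hS i hi) (hS j hj)) p
  have G : ∑ F ∈ U.powerset, wt U p F * (X F - μ) ^ 2 =
      ∑ i ∈ I, ∑ j ∈ I, (1 - p) ^ (S i ∪ S j).card - μ ^ 2 := by
    have : ∀ F ∈ U.powerset, wt U p F * (X F - μ) ^ 2 =
        wt U p F * X F ^ 2 - 2 * μ * (wt U p F * X F) + μ ^ 2 * wt U p F := by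
      intro F _
      ring
    rw [Finset.sum_congr rfl this, Finset.sum_add_distrib, Finset.sum_sub_distrib,
      ← Finset.mul_sum, ← Finset.mul_sum, B, C, wt_sum]
    ring
  refine A.trans (G.le.trans ?_)
  have H : ∀ i ∈ I, ∑ j ∈ I, (1 - p) ^ (S i ∪ S j).card ≤
      I.card * ((1 - p) ^ m * (1 - p) ^ m) + D * (1 - p) ^ m := by
    intro i hi
    have h2 : ∀ j ∈ I, (1 - p) ^ (S i ∪ S j).card ≤ (1 - p) ^ m * (1 - p) ^ m +
        (if ¬ Disjoint (S i) (S j) then (1 - p) ^ m else 0) := by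
      intro j hj
      by_cases h : ¬ Disjoint (S i) (S j)
      · rw [if_pos h]
        have : (1 - p) ^ (S i ∪ S j).card ≤ (1 - p) ^ m := by
          apply pow_le_pow_of_le_one hr0 (by linarith)
          rw [← hm i hi]
          exact Finset.card_le_card Finset.subset_union_left
        have : 0 ≤ (1 - p) ^ m * (1 - p) ^ m := by positivity
        linarith
      · rw [if_neg h]
        rw [not_not] at h
        rw [Finset.card_union_of_disjoint h, hm i hi, hm j hj, pow_add, add_zero]
    refine (Finset.sum_le_sum h2).trans ?_
    rw [Finset.sum_add_distrib, ← Finset.sum_filter]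
    simp only [Finset.sum_const, nsmul_eq_mul]
    have h3 : ((I.filter (fun j => ¬ Disjoint (S i) (S j))).card : ℝ) ≤ D := by
      have := hD i hi
      norm_cast
    have := mul_le_mul_of_nonneg_right h3 (pow_nonneg hr0 m)
    linarith
  have := Finset.sum_le_sum H
  simp only [Finset.sum_const, nsmul_eq_mul] at this
  rw [hμ]
  nlinarith [this]

/-- The `t`-sets containing `x`. -/
def sups {n : ℕ} (t : ℕ) (x : Finset (Fin n)) : Finset (Finset (Fin n)) :=
  Finset.univ.filter (fun s : Finset (Fin n) => s.card = t ∧ x ⊆ s)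

lemma mem_sups {n : ℕ} (t : ℕ) (x s : Finset (Fin n)) :
    s ∈ sups t x ↔ s.card = t ∧ x ⊆ s := by
  simp [sups]

lemma sups_form {n t : ℕ} (x s : Finset (Fin n)) (hx : x.card + 1 = t) (hs : s ∈ sups t x) :
    ∃ a, a ∉ x ∧ insert a x = s := by
  rw [mem_sups] at hs
  obtain ⟨h1, h2⟩ := hs
  have h3 : (s \ x).card = 1 := by
    have := Finset.card_sdiff_add_card_eq_card h2
    omega
  obtain ⟨a, ha⟩ := Finset.card_eq_one.1 h3
  have ha' : a ∈ s \ x := by rw [ha]; simp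
  refine ⟨a, (Finset.mem_sdiff.1 ha').2, ?_⟩
  rw [Finset.insert_eq, ← ha, Finset.sdiff_union_of_subset h2]

lemma sups_card {n t : ℕ} (htn : t ≤ n) (x : Finset (Fin n)) (hx : x.card + 1 = t) :
    (sups t x).card = n - t + 1 := by
  have h : sups t x = xᶜ.image (fun a => insert a x) := by
    ext s
    constructor
    · intro hs
      obtain ⟨a, ha, hb⟩ := sups_form x s hx hs
      exact Finset.mem_image.2 ⟨a, by simpa using ha, hb⟩
    · intro hs
      obtain ⟨a, ha, hb⟩ := Finset.mem_image.1 hs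
      rw [mem_sups, ← hb, Finset.card_insert_of_notMem (by simpa using ha)]
      exact ⟨hx, Finset.subset_insert _ _⟩
  rw [h, Finset.card_image_of_injOn, Finset.card_compl, Fintype.card_fin]
  · omega
  · intro a ha b hb hab
    simp only at hab
    have h1 : a ∈ insert b x := by rw [← hab]; simp
    rcases Finset.mem_insert.1 h1 with h2 | h2
    · exact h2
    · exact absurd h2 (by simpa using ha)

lemma sups_deg {n t : ℕ} (x : Finset (Fin n)) (hx : x.card + 1 = t) :
    ((Finset.univ.filter (fun y : Finset (Fin n) => y.card + 1 = t)).filter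
      (fun y => ¬ Disjoint (sups t x) (sups t y))).card ≤ n ^ 2 := by
  have : ((Finset.univ.filter (fun y : Finset (Fin n) => y.card + 1 = t)).filter
      (fun y => ¬ Disjoint (sups t x) (sups t y))) ⊆
      (Finset.univ : Finset (Fin n × Fin n)).image (fun ab => (insert ab.1 x).erase ab.2) := by
    intro y hy
    simp only [Finset.mem_filter, Finset.mem_univ, true_and] at hy
    obtain ⟨hy1, hy2⟩ := hy
    rw [Finset.not_disjoint_iff] at hy2
    obtain ⟨s, hs1, hs2⟩ := hy2
    obtain ⟨a, _, ha⟩ := sups_form x s hx hs1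
    obtain ⟨b, hb, hb2⟩ := sups_form y s hy1 hs2
    refine Finset.mem_image.2 ⟨(a, b), Finset.mem_univ _, ?_⟩
    simp only
    rw [ha, ← hb2, Finset.erase_insert hb]
  refine (Finset.card_le_card this).trans (Finset.card_image_le.trans ?_)
  simp [sq]

lemma event_iff {n t : ℕ} (ht : 2 ≤ t) (htn : t ≤ n) (F : Finset (Finset (Fin n)))
    (hF : F ∈ (Finset.univ.filter (fun s : Finset (Fin n) => s.card = t)).powerset) :
    (∀ x : Finset (Fin n), x.Nonempty → x.card ≤ t - 1 → x ∈ genComplex F) ↔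
    ∀ y ∈ Finset.univ.filter (fun y : Finset (Fin n) => y.card + 1 = t),
      ¬ Disjoint F (sups t y) := by
  have hF' : ∀ s ∈ F, s.card = t := fun s hs => by
    simpa using Finset.mem_powerset.1 hF hs
  constructor
  · intro h y hy
    simp only [Finset.mem_filter, Finset.mem_univ, true_and] at hy
    have := h y (Finset.card_pos.1 (by omega)) (by omega)
    simp only [genComplex, Finset.mem_filter, Finset.mem_univ, true_and] at this
    obtain ⟨_, f, hf, hyf⟩ := this
    rw [Finset.not_disjoint_iff]
    exact ⟨f, hf, (mem_sups _ _ _).2 ⟨hF' f hf, hyf⟩⟩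
  · intro h x hx hxt
    obtain ⟨y, hxy, hy⟩ := Finset.exists_superset_card_eq (n := t - 1) hxt (by simp; omega)
    have := h y (by simp; omega)
    rw [Finset.not_disjoint_iff] at this
    obtain ⟨f, hf, hs⟩ := this
    rw [mem_sups] at hs
    simp only [genComplex, Finset.mem_filter, Finset.mem_univ, true_and]
    exact ⟨hx, f, hf, hxy.trans hs.2⟩

lemma card_U (n t : ℕ) :
    (Finset.univ.filter (fun s : Finset (Fin n) => s.card = t)).card = n.choose t := by
  have : Finset.univ.filter (fun s : Finset (Fin n) => s.card = t) =
      Finset.powersetCard t Finset.univ := by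
    ext s
    simp [Finset.mem_powersetCard]
  rw [this]
  simp

lemma card_I (n t : ℕ) (ht : 1 ≤ t) :
    (Finset.univ.filter (fun s : Finset (Fin n) => s.card + 1 = t)).card = n.choose (t - 1) := by
  rw [← card_U]
  congr 1
  ext s
  simp
  omega

lemma rp_lower {n t : ℕ} (ht : 2 ≤ t) (htn : t ≤ n) {p : ℝ} (h0 : 0 ≤ p) (h1 : p ≤ 1) :
    1 - n.choose (t - 1) * (1 - p) ^ (n - t + 1) ≤ rpProb n t p
      (fun Δ => ∀ x : Finset (Fin n), x.Nonempty → x.card ≤ t - 1 → x ∈ Δ) := by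
  have := first_moment (Finset.univ.filter (fun s : Finset (Fin n) => s.card = t))
    (Finset.univ.filter (fun y : Finset (Fin n) => y.card + 1 = t)) (sups t)
    (by
      intro i _ s hs
      rw [mem_sups] at hs
      simpa using hs.1) (n - t + 1)
    (by
      intro i hi
      exact sups_card htn i (by simpa using hi)) p h0 h1
    (fun F => ∀ x : Finset (Fin n), x.Nonempty → x.card ≤ t - 1 → x ∈ genComplex F)
    (fun F hF h => (event_iff ht htn F hF).2 h)
  rw [card_I n t (by omega)] at this
  refine this.trans (le_of_eq ?_)
  unfold rpProb wt
  rw [card_U]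

lemma rp_upper {n t : ℕ} (ht : 2 ≤ t) (htn : t ≤ n) {p : ℝ} (h0 : 0 ≤ p) (h1 : p < 1) :
    rpProb n t p
      (fun Δ => ∀ x : Finset (Fin n), x.Nonempty → x.card ≤ t - 1 → x ∈ Δ) *
      (n.choose (t - 1) * (1 - p) ^ (n - t + 1)) ≤ n ^ 2 := by
  have := second_moment (Finset.univ.filter (fun s : Finset (Fin n) => s.card = t))
    (Finset.univ.filter (fun y : Finset (Fin n) => y.card + 1 = t)) (sups t)
    (by
      intro i _ s hs
      rw [mem_sups] at hs
      simpa using hs.1) (n - t + 1)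
    (by
      intro i hi
      exact sups_card htn i (by simpa using hi)) p h0 h1.le (n ^ 2)
    (by
      intro i hi
      convert sups_deg i (by simpa using hi))
    (fun F => ∀ x : Finset (Fin n), x.Nonempty → x.card ≤ t - 1 → x ∈ genComplex F)
    (fun F hF h => (event_iff ht htn F hF).1 h)
  rw [card_I n t (by omega)] at this
  have hpos : (0:ℝ) < n.choose (t - 1) * (1 - p) ^ (n - t + 1) := by
    have h2 : 0 < 1 - p := by linarith
    have h3 : 0 < n.choose (t - 1) := Nat.choose_pos (by omega)
    positivity
  rw [sq, ← mul_assoc] at this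
  have h4 := le_of_mul_le_mul_right this hpos
  push_cast at h4
  refine le_trans (le_of_eq ?_) h4
  congr 1
  unfold rpProb wt
  rw [card_U]

/-- Binomial term. -/
def bt (c : ℝ) (n k : ℕ) : ℝ := c ^ k * (1 - c) ^ (n - k) * n.choose k

lemma bt_sum (c : ℝ) (n : ℕ) : ∑ k ∈ Finset.range (n + 1), bt c n k = 1 := by
  have := add_pow c (1 - c) n
  unfold bt
  rw [← this]
  simp

lemma bt_nonneg {c : ℝ} (hc0 : 0 < c) (hc1 : c < 1) (n k : ℕ) : 0 ≤ bt c n k := by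
  unfold bt
  have : 0 < 1 - c := by linarith
  positivity

lemma bt_succ (c : ℝ) {n k : ℕ} (hk : k < n) :
    bt c n (k + 1) * ((k + 1) * (1 - c)) = bt c n k * ((n - k) * c) := by
  have h := Nat.choose_succ_right_eq n k
  have h' : (n.choose (k + 1) : ℝ) * (k + 1) = n.choose k * (n - k) := by
    rw [← Nat.cast_sub hk.le]
    exact_mod_cast h
  have e : n - k = (n - (k + 1)) + 1 := by omega
  unfold bt
  rw [e, pow_succ, pow_succ]
  linear_combination (c ^ k * c * (1 - c) ^ (n - (k + 1)) * (1 - c)) * h'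

lemma bt_max {c : ℝ} (hc0 : 0 < c) (hc1 : c < 1) {n t : ℕ} (ht : (t : ℝ) = c * n) (k : ℕ)
    (hk : k ≤ n) : bt c n k ≤ bt c n t := by
  have hc2 : 0 < 1 - c := by linarith
  have htn : t ≤ n := by
    have : (t : ℝ) ≤ n := by rw [ht]; nlinarith [(Nat.cast_nonneg n : (0:ℝ) ≤ n)]
    exact_mod_cast this
  rcases le_total k t with h | h
  · refine Nat.decreasingInduction' (P := fun k => bt c n k ≤ bt c n t) ?_ h le_rfl
    intro j hj _ ih
    refine le_trans ?_ ih
    have hjn : j < n := by omega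
    have h1 := bt_succ c hjn
    have h2 : (j : ℝ) + 1 ≤ t := by exact_mod_cast hj
    have h3 : ((j : ℝ) + 1) * (1 - c) ≤ (n - j) * c := by nlinarith
    have h4 : 0 < ((j : ℝ) + 1) * (1 - c) := by positivity
    have h5 := mul_le_mul_of_nonneg_left h3 (bt_nonneg hc0 hc1 n j)
    rw [← h1] at h5
    exact le_of_mul_le_mul_right h5 h4
  · induction k, h using Nat.le_induction with
    | base => exact le_rfl
    | succ j hj ih =>
      refine le_trans ?_ (ih (by omega))
      have hjn : j < n := by omega
      have h1 := bt_succ c hjn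
      have h2 : (t : ℝ) ≤ j := by exact_mod_cast hj
      have h3 : (n - j) * c ≤ ((j : ℝ) + 1) * (1 - c) := by nlinarith
      have h4 : 0 < ((j : ℝ) + 1) * (1 - c) := by positivity
      have h5 := mul_le_mul_of_nonneg_left h3 (bt_nonneg hc0 hc1 n j)
      rw [← h1] at h5
      exact le_of_mul_le_mul_right h5 h4

lemma bt_le_one {c : ℝ} (hc0 : 0 < c) (hc1 : c < 1) {n t : ℕ} (ht : t ≤ n) : bt c n t ≤ 1 := by
  rw [← bt_sum c n]
  exact Finset.single_le_sum (fun k _ => bt_nonneg hc0 hc1 n k) (by simp; omega)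

lemma bt_ge {c : ℝ} (hc0 : 0 < c) (hc1 : c < 1) {n t : ℕ} (ht : (t : ℝ) = c * n) :
    1 ≤ (n + 1) * bt c n t := by
  have := Finset.sum_le_sum (s := Finset.range (n + 1)) (f := bt c n) (g := fun _ => bt c n t)
    (fun k hk => bt_max hc0 hc1 ht k (by simp at hk; omega))
  rw [bt_sum] at this
  simpa using this

lemma r_pow {c : ℝ} (hc0 : 0 < c) (hc1 : c < 1) {n t : ℕ} (hn : 0 < n) (htn : t ≤ n)
    (ht : (t : ℝ) = c * n) (u : ℝ) :
    Real.exp (-entropy c / (1 - c) + u / ((1 - c) * n)) ^ (n - t) =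
      c ^ t * (1 - c) ^ (n - t) * Real.exp u := by
  have hc2 : 0 < 1 - c := by linarith
  have hn' : (0 : ℝ) < n := by exact_mod_cast hn
  have e1 : c ^ t = Real.exp (t * Real.log c) := by
    rw [mul_comm, Real.exp_mul, Real.exp_log hc0, Real.rpow_natCast]
  have e2 : (1 - c) ^ (n - t) = Real.exp ((n - t : ℕ) * Real.log (1 - c)) := by
    rw [mul_comm, Real.exp_mul, Real.exp_log hc2, Real.rpow_natCast]
  rw [e1, e2, ← Real.exp_nat_mul, ← Real.exp_add, ← Real.exp_add]
  congr 1
  rw [Nat.cast_sub htn, ht]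
  unfold entropy
  field_simp
  ring

lemma entropy_pos {c : ℝ} (hc0 : 0 < c) (hc1 : c < 1) : 0 < entropy c := by
  have h1 := Real.log_neg hc0 hc1
  have h2 := Real.log_neg (x := 1 - c) (by linarith) (by linarith)
  unfold entropy
  nlinarith

lemma choose_pred {n t : ℕ} (ht : 1 ≤ t) (htn : t ≤ n) :
    (n.choose (t - 1) : ℝ) * (n - t + 1) = n.choose t * t := by
  obtain ⟨k, rfl⟩ : ∃ k, t = k + 1 := ⟨t - 1, by omega⟩
  have h := Nat.choose_succ_right_eq n k
  have h' : (n.choose (k + 1) : ℝ) * (k + 1) = n.choose k * (n - k) := by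
    rw [← Nat.cast_sub (by omega)]
    exact_mod_cast h
  simp only [Nat.add_sub_cancel]
  push_cast
  linear_combination -h'

/-- For a constant `0 < c < 1`, there is a constant `q > 0` such that, for
`t = cn` and `t' = t - 1`: with `p = 1 - exp(-α(c)/(1-c) - q log n/((1-c)n))`,
`Δ ~ RP(n,t,p)` has a complete `t'`-skeleton with high probability, while with
`p = 1 - exp(-α(c)/(1-c) + q log n/((1-c)n))` it with high probability does
not. -/
theorem stmt3 (c : ℝ) (hc0 : 0 < c) (hc1 : c < 1) :
    ∃ q : ℝ, 0 < q ∧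
      ((∀ ε : ℝ, 0 < ε → ∃ N : ℕ, ∀ n : ℕ, N ≤ n → ∀ t : ℕ, (t : ℝ) = c * n →
          1 - ε ≤ rpProb n t
            (1 - Real.exp (-entropy c / (1 - c) - q * Real.log n / ((1 - c) * n)))
            (fun Δ => ∀ x : Finset (Fin n), x.Nonempty → x.card ≤ t - 1 → x ∈ Δ)) ∧
        (∀ ε : ℝ, 0 < ε → ∃ N : ℕ, ∀ n : ℕ, N ≤ n → ∀ t : ℕ, (t : ℝ) = c * n →
          rpProb n t
            (1 - Real.exp (-entropy c / (1 - c) + q * Real.log n / ((1 - c) * n)))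
            (fun Δ => ∀ x : Finset (Fin n), x.Nonempty → x.card ≤ t - 1 → x ∈ Δ) ≤ ε)) := by
  have hc2 : 0 < 1 - c := by linarith
  have hα := entropy_pos hc0 hc1
  refine ⟨5, by norm_num, ?_, ?_⟩
  · intro ε hε
    obtain ⟨N, hN⟩ := exists_nat_gt (2 / c + 1 / ε + 1)
    refine ⟨N, fun n hn t ht => ?_⟩
    have hn1 : (N : ℝ) ≤ n := by exact_mod_cast hn
    have p1 : 0 < 2 / c := by positivity
    have p2 : 0 < 1 / ε := by positivity
    have hnr : (1 : ℝ) ≤ n := by linarith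
    have hn0 : 0 < n := by exact_mod_cast (by linarith : (0:ℝ) < n)
    have ht2 : 2 ≤ t := by
      have : (2 : ℝ) ≤ t := by
        rw [ht]
        have : 2 / c ≤ n := by linarith
        rw [div_le_iff₀ hc0] at this
        linarith
      exact_mod_cast this
    have htr : (t : ℝ) ≤ n := by rw [ht]; nlinarith
    have htn : t ≤ n := by exact_mod_cast htr
    have hL : 0 ≤ Real.log n := Real.log_nonneg hnr
    set r := Real.exp (-entropy c / (1 - c) - 5 * Real.log n / ((1 - c) * n)) with hr
    have hr0 : 0 < r := Real.exp_pos _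
    have hr1 : r ≤ 1 := by
      rw [hr, Real.exp_le_one_iff]
      have : 0 ≤ 5 * Real.log n / ((1 - c) * n) := by positivity
      have : 0 ≤ entropy c / (1 - c) := by positivity
      rw [neg_div]
      linarith
    refine le_trans ?_ (rp_lower ht2 htn (p := 1 - r) (by linarith) (by linarith))
    rw [sub_sub_cancel]
    have hp : r ^ (n - t) = c ^ t * (1 - c) ^ (n - t) * Real.exp (-(5 * Real.log n)) := by
      rw [← r_pow hc0 hc1 hn0 htn ht, hr]
      congr 2
      ring
    have hexp : Real.exp (-(5 * Real.log n)) = ((n : ℝ) ^ 5)⁻¹ := by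
      rw [Real.exp_neg, mul_comm, Real.exp_mul, Real.exp_log (by linarith)]
      norm_cast
    have hch := choose_pred (n := n) (t := t) (by omega) htn
    have hb := bt_le_one hc0 hc1 htn
    have hb0 := bt_nonneg hc0 hc1 n t
    have hC : (n.choose (t - 1) : ℝ) ≤ n.choose t * n := by
      have a1 : (n.choose (t - 1) : ℝ) * 1 ≤ n.choose (t - 1) * (n - t + 1) :=
        mul_le_mul_of_nonneg_left (by linarith) (by positivity)
      have a2 : (n.choose t : ℝ) * t ≤ n.choose t * n :=
        mul_le_mul_of_nonneg_left htr (by positivity)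
      linarith
    have hlast : (n.choose (t - 1) : ℝ) * r ^ (n - t + 1) ≤ 1 / n := by
      calc (n.choose (t - 1) : ℝ) * r ^ (n - t + 1)
          ≤ n.choose (t - 1) * r ^ (n - t) := by
            apply mul_le_mul_of_nonneg_left _ (by positivity)
            exact pow_le_pow_of_le_one hr0.le hr1 (by omega)
        _ ≤ (n.choose t * n) * r ^ (n - t) := mul_le_mul_of_nonneg_right hC (by positivity)
        _ = bt c n t * (n * ((n : ℝ) ^ 5)⁻¹) := by
            rw [hp, hexp]
            unfold bt
            ring
        _ ≤ 1 * (n * ((n : ℝ) ^ 5)⁻¹) := mul_le_mul_of_nonneg_right hb (by positivity)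
        _ ≤ 1 / n := by
            have : (n : ℝ) ^ 2 ≤ n ^ 5 := pow_le_pow_right₀ hnr (by norm_num)
            rw [one_mul, ← div_eq_mul_inv, div_le_div_iff₀ (by positivity) (by positivity)]
            linarith
    have : 1 / (n : ℝ) ≤ ε := by
      rw [div_le_iff₀ (by linarith)]
      have : 1 / ε ≤ n := by linarith
      rw [div_le_iff₀ hε] at this
      linarith
    linarith
  · intro ε hε
    set r0 := Real.exp (-entropy c / (1 - c)) with hr0def
    have hr00 : 0 < r0 := Real.exp_pos _
    have hlog : ∀ᶠ x : ℝ in Filter.atTop, Real.log x ≤ entropy c / 5 * x := by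
      have := Real.isLittleO_log_id_atTop.def (show 0 < entropy c / 5 by positivity)
      filter_upwards [this, Filter.eventually_ge_atTop 0] with x hx hx0
      simp only [id, Real.norm_eq_abs, abs_of_nonneg hx0] at hx
      exact (le_abs_self _).trans hx
    obtain ⟨M, hM⟩ := Filter.eventually_atTop.1 hlog
    obtain ⟨N, hN⟩ := exists_nat_gt (2 / c + 2 / (ε * r0) + 1 + |M|)
    refine ⟨N, fun n hn t ht => ?_⟩
    have hn1 : (N : ℝ) ≤ n := by exact_mod_cast hn
    have p1 : 0 < 2 / c := by positivity
    have p2 : 0 < 2 / (ε * r0) := by positivity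
    have p3 := abs_nonneg M
    have hnr : (1 : ℝ) ≤ n := by linarith
    have hn0 : 0 < n := by exact_mod_cast (by linarith : (0:ℝ) < n)
    have ht2r : (2 : ℝ) ≤ t := by
      rw [ht]
      have : 2 / c ≤ n := by linarith
      rw [div_le_iff₀ hc0] at this
      linarith
    have ht2 : 2 ≤ t := by exact_mod_cast ht2r
    have htr : (t : ℝ) ≤ n := by rw [ht]; nlinarith
    have htn : t ≤ n := by exact_mod_cast htr
    have hL : 0 ≤ Real.log n := Real.log_nonneg hnr
    have hLn := hM n (by linarith [le_abs_self M])
    set r := Real.exp (-entropy c / (1 - c) + 5 * Real.log n / ((1 - c) * n)) with hr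
    have hr0 : 0 < r := Real.exp_pos _
    have hrr : r0 ≤ r := by
      rw [hr, hr0def, Real.exp_le_exp]
      have : 0 ≤ 5 * Real.log n / ((1 - c) * n) := by positivity
      linarith
    have hr1 : r ≤ 1 := by
      rw [hr, Real.exp_le_one_iff, neg_div]
      have : 5 * Real.log n / ((1 - c) * n) ≤ entropy c / (1 - c) := by
        rw [div_le_div_iff₀ (by positivity) hc2]
        nlinarith
      linarith
    have hup := rp_upper ht2 htn (p := 1 - r) (by linarith) (by linarith)
    rw [sub_sub_cancel] at hup
    have hp : r ^ (n - t) = c ^ t * (1 - c) ^ (n - t) * Real.exp (5 * Real.log n) := by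
      rw [← r_pow hc0 hc1 hn0 htn ht, hr]
    have hexp : Real.exp (5 * Real.log n) = (n : ℝ) ^ 5 := by
      rw [mul_comm, Real.exp_mul, Real.exp_log (by linarith)]
      norm_cast
    have hch := choose_pred (n := n) (t := t) (by omega) htn
    have hb := bt_ge hc0 hc1 ht
    have hC : (n.choose t : ℝ) ≤ n.choose (t - 1) * n := by
      have a1 : (n.choose (t - 1) : ℝ) * (n - t + 1) ≤ n.choose (t - 1) * n :=
        mul_le_mul_of_nonneg_left (by linarith) (by positivity)
      have a2 : (n.choose t : ℝ) * 1 ≤ n.choose t * t :=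
        mul_le_mul_of_nonneg_left (by linarith) (by positivity)
      linarith
    have hlow : (n : ℝ) ^ 5 * r0 ≤
        (n * (n + 1)) * (n.choose (t - 1) * r ^ (n - t + 1)) := by
      calc (n : ℝ) ^ 5 * r0 ≤ n ^ 5 * r := mul_le_mul_of_nonneg_left hrr (by positivity)
        _ = 1 * (n ^ 5 * r) := by ring
        _ ≤ ((n + 1) * bt c n t) * (n ^ 5 * r) := mul_le_mul_of_nonneg_right hb (by positivity)
        _ = n.choose t * ((n + 1) * r ^ (n - t + 1)) := by
            rw [pow_succ r, hp, hexp]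
            unfold bt
            ring
        _ ≤ (n.choose (t - 1) * n) * ((n + 1) * r ^ (n - t + 1)) :=
            mul_le_mul_of_nonneg_right hC (by positivity)
        _ = _ := by ring
    by_contra hcon
    push Not at hcon
    set P := rpProb n t (1 - r)
      (fun Δ => ∀ x : Finset (Fin n), x.Nonempty → x.card ≤ t - 1 → x ∈ Δ) with hP
    have hP0 : 0 < P := hε.trans hcon
    have h1 : P * ((n : ℝ) ^ 5 * r0) ≤ (n * (n + 1)) * n ^ 2 := by
      calc P * ((n : ℝ) ^ 5 * r0) ≤ P * ((n * (n + 1)) * (n.choose (t - 1) * r ^ (n - t + 1))) :=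
            mul_le_mul_of_nonneg_left hlow hP0.le
        _ = (n * (n + 1)) * (P * (n.choose (t - 1) * r ^ (n - t + 1))) := by ring
        _ ≤ _ := mul_le_mul_of_nonneg_left hup (by positivity)
    have h2 : (n * (n + 1) : ℝ) * n ^ 2 ≤ 2 * n ^ 4 := by
      have : (n : ℝ) ^ 3 * 1 ≤ n ^ 3 * n := mul_le_mul_of_nonneg_left hnr (by positivity)
      nlinarith
    have h3 : (n : ℝ) ^ 4 * (P * (n * r0)) ≤ n ^ 4 * 2 := by nlinarith
    have h4 : P * (n * r0) ≤ 2 := le_of_mul_le_mul_left h3 (by positivity)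
    have h5 : 2 < n * (ε * r0) := by
      rw [← div_lt_iff₀ (by positivity)]
      linarith
    have h6 : ε * (n * r0) ≤ P * (n * r0) := mul_le_mul_of_nonneg_right hcon.le (by positivity)
    linarith
end
end

section
/- For every ε > 0 the following holds: for n ranging over even natural numbers and Δ drawn from U(n), the probability that the number of (n/2+1)-element subsets of [n] that are holes of Δ is at least (1−ε)·2^{(n−1)/2}/√(πn) tends to 1 as n → ∞. -/
open scoped Classical

noncomputable section

/-- `Δ` is a simplicial complex on vertex set `Fin n`: all faces are nonempty
and it is downward closed. -/
def IsComplex {n : ℕ} (Δ : Finset (Finset (Fin n))) : Prop :=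
  (∀ x ∈ Δ, x.Nonempty) ∧
    ∀ x ∈ Δ, ∀ y : Finset (Fin n), y.Nonempty → y ⊆ x → y ∈ Δ

/-- The finite set of all simplicial complexes on `n` vertices. -/
def allComplexes (n : ℕ) : Finset (Finset (Finset (Fin n))) :=
  Finset.univ.filter IsComplex

/-- The probability, under the uniform measure `U(n)` on all simplicial
complexes on `n` vertices, of the event `P`. -/
def uniformProb (n : ℕ) (P : Finset (Finset (Fin n)) → Prop) : ℝ :=
  (((allComplexes n).filter P).card : ℝ) / ((allComplexes n).card : ℝ)

/-- `x` is a hole of `Δ` of dimension `m`: an `(m+1)`-set that is not a face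
although all its `m`-subsets are faces. -/
def IsHole {n : ℕ} (Δ : Finset (Finset (Fin n))) (m : ℕ) (x : Finset (Fin n)) : Prop :=
  x.card = m + 1 ∧ x ∉ Δ ∧ ∀ y ⊆ x, y.card = m → y ∈ Δ


lemma two_holder {ι : Type*} (s : Finset ι) (a c : ι → ℝ) (ha : ∀ i ∈ s, 0 < a i)
    (hc : ∀ i ∈ s, 0 < c i) (hs : s.Nonempty) :
    ∏ i ∈ s, a i ^ ((1 : ℝ) / s.card) + ∏ i ∈ s, c i ^ ((1 : ℝ) / s.card) ≤
      ∏ i ∈ s, (a i + c i) ^ ((1 : ℝ) / s.card) := by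
  have hr : (0 : ℝ) < s.card := by exact_mod_cast hs.card_pos
  have hw : ∑ _i ∈ s, (1 : ℝ) / s.card = 1 := by
    rw [Finset.sum_const, nsmul_eq_mul]; field_simp
  have h1 := Real.geom_mean_le_arith_mean_weighted s (fun _ => (1 : ℝ) / s.card)
    (fun i => a i / (a i + c i)) (fun _ _ => by positivity) hw
    (fun i hi => div_nonneg (ha i hi).le (add_pos (ha i hi) (hc i hi)).le)
  have h2 := Real.geom_mean_le_arith_mean_weighted s (fun _ => (1 : ℝ) / s.card)
    (fun i => c i / (a i + c i)) (fun _ _ => by positivity) hw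
    (fun i hi => div_nonneg (hc i hi).le (add_pos (ha i hi) (hc i hi)).le)
  have h3 : ∑ i ∈ s, (1 : ℝ) / s.card * (a i / (a i + c i)) +
      ∑ i ∈ s, (1 : ℝ) / s.card * (c i / (a i + c i)) = 1 := by
    rw [← Finset.sum_add_distrib]
    refine Eq.trans ?_ hw
    refine Finset.sum_congr rfl fun i hi => ?_
    have := add_pos (ha i hi) (hc i hi)
    field_simp
  have hP : 0 < ∏ i ∈ s, (a i + c i) ^ ((1 : ℝ) / s.card) :=
    Finset.prod_pos fun i hi => Real.rpow_pos_of_pos (add_pos (ha i hi) (hc i hi)) _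
  have e1 : ∏ i ∈ s, (a i / (a i + c i)) ^ ((1 : ℝ) / s.card) =
      (∏ i ∈ s, a i ^ ((1 : ℝ) / s.card)) / ∏ i ∈ s, (a i + c i) ^ ((1 : ℝ) / s.card) := by
    rw [← Finset.prod_div_distrib]
    exact Finset.prod_congr rfl fun i hi =>
      Real.div_rpow (ha i hi).le (add_pos (ha i hi) (hc i hi)).le _
  have e2 : ∏ i ∈ s, (c i / (a i + c i)) ^ ((1 : ℝ) / s.card) =
      (∏ i ∈ s, c i ^ ((1 : ℝ) / s.card)) / ∏ i ∈ s, (a i + c i) ^ ((1 : ℝ) / s.card) := by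
    rw [← Finset.prod_div_distrib]
    exact Finset.prod_congr rfl fun i hi =>
      Real.div_rpow (hc i hi).le (add_pos (ha i hi) (hc i hi)).le _
  rw [e1] at h1
  rw [e2] at h2
  have h4 := add_le_add h1 h2
  rw [h3, ← add_div, div_le_one hP] at h4
  exact h4

lemma finner {α β : Type*} [DecidableEq α] (S : Finset β) (inc : β → α → Prop)
    [∀ b e, Decidable (inc b e)] (r : ℕ) (hr : 0 < r)
    (E : Finset α) : ∀ (_ : ∀ e ∈ E, (S.filter (fun b => inc b e)).card = r)
    (g : β → Finset α → ℝ) (_ : ∀ b V, 0 < g b V),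
    ∑ U ∈ E.powerset, ∏ b ∈ S, g b (U.filter (inc b)) ^ ((1 : ℝ) / r) ≤
      ∏ b ∈ S, (∑ V ∈ (E.filter (inc b)).powerset, g b V) ^ ((1 : ℝ) / r) := by
  induction E using Finset.induction_on with
  | empty => intro _ g hg; simp
  | insert e E he ih =>
    intro h g hg
    have hE : ∀ e ∈ E, (S.filter (fun b => inc b e)).card = r :=
      fun x hx => h x (Finset.mem_insert_of_mem hx)
    rw [Finset.sum_powerset_insert he]
    set g1 : β → Finset α → ℝ := fun b V => if inc b e then g b (insert e V) else g b V with hg1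
    have hg1p : ∀ b V, 0 < g1 b V := by
      intro b V; simp only [hg1]; split_ifs <;> exact hg _ _
    have i0 := ih hE g hg
    have i1 := ih hE g1 hg1p
    have e1 : ∑ U ∈ E.powerset, ∏ b ∈ S, g b ((insert e U).filter (inc b)) ^ ((1 : ℝ) / r) =
        ∑ U ∈ E.powerset, ∏ b ∈ S, g1 b (U.filter (inc b)) ^ ((1 : ℝ) / r) := by
      refine Finset.sum_congr rfl fun U _ => Finset.prod_congr rfl fun b _ => ?_
      simp only [hg1, Finset.filter_insert]
      split_ifs <;> rfl
    rw [e1]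
    refine (add_le_add i0 i1).trans ?_
    set G0 : β → ℝ := fun b => ∑ V ∈ (E.filter (inc b)).powerset, g b V with hG0
    set G1 : β → ℝ := fun b => ∑ V ∈ (E.filter (inc b)).powerset, g1 b V with hG1
    have hG0p : ∀ b, 0 < G0 b := fun b =>
      Finset.sum_pos (fun V _ => hg b V) ⟨∅, Finset.empty_mem_powerset _⟩
    have hG1p : ∀ b, 0 < G1 b := fun b =>
      Finset.sum_pos (fun V _ => hg1p b V) ⟨∅, Finset.empty_mem_powerset _⟩
    have hin : ∀ b, inc b e → ∑ V ∈ ((insert e E).filter (inc b)).powerset, g b V = G0 b + G1 b := by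
      intro b hb
      rw [Finset.filter_insert, if_pos hb, Finset.sum_powerset_insert (by simp [he])]
      simp [hG0, hG1, hg1, hb]
    have hout : ∀ b, ¬ inc b e → ∑ V ∈ ((insert e E).filter (inc b)).powerset, g b V = G0 b := by
      intro b hb
      rw [Finset.filter_insert, if_neg hb]
    have hout1 : ∀ b, ¬ inc b e → G1 b = G0 b := by
      intro b hb
      simp [hG0, hG1, hg1, hb]
    change ∏ b ∈ S, G0 b ^ ((1 : ℝ) / r) + ∏ b ∈ S, G1 b ^ ((1 : ℝ) / r) ≤ _
    rw [← Finset.prod_filter_mul_prod_filter_not S (fun b => inc b e),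
      ← Finset.prod_filter_mul_prod_filter_not S (fun b => inc b e) (fun b => G1 b ^ ((1 : ℝ) / r)),
      ← Finset.prod_filter_mul_prod_filter_not S (fun b => inc b e)
        (fun b => (∑ V ∈ ((insert e E).filter (inc b)).powerset, g b V) ^ ((1 : ℝ) / r))]
    have q1 : ∏ b ∈ S.filter (fun b => ¬ inc b e), G1 b ^ ((1 : ℝ) / r) =
        ∏ b ∈ S.filter (fun b => ¬ inc b e), G0 b ^ ((1 : ℝ) / r) :=
      Finset.prod_congr rfl fun b hb => by rw [hout1 b (Finset.mem_filter.1 hb).2]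
    have q2 : ∏ b ∈ S.filter (fun b => ¬ inc b e),
          (∑ V ∈ ((insert e E).filter (inc b)).powerset, g b V) ^ ((1 : ℝ) / r) =
        ∏ b ∈ S.filter (fun b => ¬ inc b e), G0 b ^ ((1 : ℝ) / r) :=
      Finset.prod_congr rfl fun b hb => by rw [hout b (Finset.mem_filter.1 hb).2]
    have q3 : ∏ b ∈ S.filter (fun b => inc b e),
          (∑ V ∈ ((insert e E).filter (inc b)).powerset, g b V) ^ ((1 : ℝ) / r) =
        ∏ b ∈ S.filter (fun b => inc b e), (G0 b + G1 b) ^ ((1 : ℝ) / r) :=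
      Finset.prod_congr rfl fun b hb => by rw [hin b (Finset.mem_filter.1 hb).2]
    rw [q1, q2, q3, ← add_mul]
    have hcard := h e (Finset.mem_insert_self _ _)
    have hne : (S.filter (fun b => inc b e)).Nonempty := by
      rw [← Finset.card_pos, hcard]; exact hr
    have := two_holder (S.filter (fun b => inc b e)) G0 G1 (fun b _ => hG0p b)
      (fun b _ => hG1p b) hne
    rw [hcard] at this
    exact mul_le_mul_of_nonneg_right this
      (Finset.prod_nonneg fun b _ => Real.rpow_nonneg (hG0p b).le _)

/-- Sum of an antitone function over supersets of `C`. -/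
lemma superset_sum {α : Type*} [DecidableEq α] (E C : Finset α) (hC : C ⊆ E) (f : Finset α → ℝ)
    (hf : ∀ U V, U ⊆ V → f V ≤ f U) :
    (∑ Y ∈ E.powerset.filter (fun Y => C ⊆ Y), f Y) * 2 ^ C.card ≤ ∑ U ∈ E.powerset, f U := by
  have h1 : ∑ U ∈ E.powerset, f (U ∪ C) ≤ ∑ U ∈ E.powerset, f U :=
    Finset.sum_le_sum fun U _ => hf _ _ Finset.subset_union_left
  refine le_trans (le_of_eq ?_) h1
  rw [← Finset.sum_fiberwise_of_maps_to (s := E.powerset)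
    (t := E.powerset.filter (fun Y => C ⊆ Y)) (g := fun U => U ∪ C)]
  · rw [Finset.sum_mul]
    refine Finset.sum_congr rfl fun Y hY => ?_
    have hY' := Finset.mem_filter.1 hY
    have hYE := Finset.mem_powerset.1 hY'.1
    rw [Finset.sum_congr rfl (g := fun _ => f Y)
      (fun U hU => by rw [(Finset.mem_filter.1 hU).2]), Finset.sum_const, nsmul_eq_mul, mul_comm]
    congr 1
    have : (E.powerset.filter (fun U => U ∪ C = Y)).card = C.powerset.card := by
      symm
      refine Finset.card_bij (fun R _ => (Y \ C) ∪ R) ?_ ?_ ?_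
      · intro R hR
        have hR := Finset.mem_powerset.1 hR
        rw [Finset.mem_filter, Finset.mem_powerset]
        refine ⟨Finset.union_subset (Finset.sdiff_subset.trans hYE) (hR.trans hC), ?_⟩
        ext a
        have := @hR a; have := @hY'.2 a
        simp only [Finset.mem_union, Finset.mem_sdiff]; tauto
      · intro R hR R' hR' h
        have hR := Finset.mem_powerset.1 hR
        have hR' := Finset.mem_powerset.1 hR'
        ext a
        have h1 := Finset.ext_iff.1 h a
        have := @hR a; have := @hR' a
        simp only [Finset.mem_union, Finset.mem_sdiff] at h1; tauto
      · intro U hU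
        have hU := Finset.mem_filter.1 hU
        refine ⟨U ∩ C, by simp, ?_⟩
        ext a
        have := Finset.ext_iff.1 hU.2 a
        simp only [Finset.mem_union, Finset.mem_sdiff, Finset.mem_inter] at *; tauto
    rw [this, Finset.card_powerset]; push_cast; ring
  · intro U hU
    simp only [Finset.mem_powerset, Finset.mem_filter] at *
    exact ⟨Finset.union_subset hU hC, Finset.subset_union_right⟩

/-- Counting sets in an interval via independent resampling. -/
lemma resample_card {α : Type*} [DecidableEq α] (E C0 C1 : Finset α) (h0 : C0 ⊆ E) (h1 : C1 ⊆ E)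
    (hd : Disjoint C0 C1) (Q : Finset α → Prop) :
    (E.powerset.filter (fun D => (C1 ⊆ D ∧ Disjoint D C0) ∧ Q D)).card * 2 ^ (C0.card + C1.card) =
      (E.powerset.filter (fun S => Q ((S \ C0) ∪ C1))).card := by
  symm
  rw [Finset.card_eq_sum_card_fiberwise (f := fun S => (S \ C0) ∪ C1)
    (t := E.powerset.filter (fun D => (C1 ⊆ D ∧ Disjoint D C0) ∧ Q D)), Finset.card_eq_sum_ones,
    Finset.sum_mul]
  · refine Finset.sum_congr rfl fun D hD => ?_
    obtain ⟨hDE, ⟨hD1, hD0⟩, hQ⟩ := Finset.mem_filter.1 hD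
    have hDE := Finset.mem_powerset.1 hDE
    rw [one_mul, ← Finset.card_union_of_disjoint hd, ← Finset.card_powerset]
    symm
    refine Finset.card_bij (fun T _ => (D \ C1) ∪ T) ?_ ?_ ?_
    · intro T hT
      have hT := Finset.mem_powerset.1 hT
      have key : ((D \ C1) ∪ T) \ C0 ∪ C1 = D := by
        ext a
        have := @hT a; have := @hD1 a
        have : a ∈ D → a ∉ C0 := fun h => Finset.disjoint_left.1 hD0 h
        have : a ∈ C0 → a ∉ C1 := fun h => Finset.disjoint_left.1 hd h
        simp only [Finset.mem_union, Finset.mem_sdiff] at *; tauto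
      rw [Finset.mem_filter, Finset.mem_filter, Finset.mem_powerset]
      refine ⟨⟨Finset.union_subset (Finset.sdiff_subset.trans hDE)
        (hT.trans (Finset.union_subset h0 h1)), ?_⟩, key⟩
      rw [key]; exact hQ
    · intro R hR R' hR' h
      have hR := Finset.mem_powerset.1 hR
      have hR' := Finset.mem_powerset.1 hR'
      ext a
      have h1 := Finset.ext_iff.1 h a
      have := @hR a; have := @hR' a
      have : a ∈ D → a ∉ C0 := fun h => Finset.disjoint_left.1 hD0 h
      simp only [Finset.mem_union, Finset.mem_sdiff] at *; tauto
    · intro U hU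
      have hU := Finset.mem_filter.1 hU
      refine ⟨U ∩ (C0 ∪ C1), Finset.mem_powerset.2 Finset.inter_subset_right, ?_⟩
      ext a
      have := Finset.ext_iff.1 hU.2 a
      have : a ∈ C0 → a ∉ C1 := fun h => Finset.disjoint_left.1 hd h
      simp only [Finset.mem_union, Finset.mem_sdiff, Finset.mem_inter] at *; tauto
  · intro S hS
    simp only [Finset.coe_filter, Finset.mem_powerset, Set.mem_ofPred_eq] at *
    refine ⟨Finset.union_subset (Finset.sdiff_subset.trans hS.1) h1,
      ⟨Finset.subset_union_right, ?_⟩, hS.2⟩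
    rw [Finset.disjoint_union_left]
    exact ⟨Finset.sdiff_disjoint, hd.symm⟩


/-- The `k`-th layer of the Boolean lattice. -/
def Lay (n k : ℕ) : Finset (Finset (Fin n)) := Finset.powersetCard k Finset.univ

lemma mem_Lay {n k : ℕ} {x : Finset (Fin n)} : x ∈ Lay n k ↔ x.card = k := by
  simp [Lay, Finset.mem_powersetCard]

lemma card_Lay (n k : ℕ) : (Lay n k).card = n.choose k := by
  simp [Lay]

lemma mem_shadow' {n k : ℕ} {U : Finset (Finset (Fin n))} (hU : U ⊆ Lay n (k + 1))
    {x : Finset (Fin n)} : x ∈ U.shadow ↔ x.card = k ∧ ∃ y ∈ U, x ⊆ y := by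
  rw [Finset.mem_shadow_iff_exists_mem_card_add_one]
  constructor
  · rintro ⟨y, hy, hxy, hc⟩
    have := mem_Lay.1 (hU hy)
    exact ⟨by omega, y, hy, hxy⟩
  · rintro ⟨hx, y, hy, hxy⟩
    have := mem_Lay.1 (hU hy)
    exact ⟨y, hy, hxy, by omega⟩

lemma shadow_mono' {n : ℕ} {U V : Finset (Finset (Fin n))} (h : U ⊆ V) :
    U.shadow ⊆ V.shadow := Finset.shadow_mono h

lemma card_up {n t : ℕ} (b : Finset (Fin n)) (hb : b.card = t) :
    ((Lay n (t + 1)).filter (fun x => b ⊆ x)).card = n - t := by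
  have : ((Lay n (t + 1)).filter (fun x => b ⊆ x)) = bᶜ.image (fun a => insert a b) := by
    ext x
    simp only [Finset.mem_filter, mem_Lay, Finset.mem_image, Finset.mem_compl]
    constructor
    · rintro ⟨hx, hbx⟩
      obtain ⟨a, ha⟩ := Finset.card_eq_one.1
        (show (x \ b).card = 1 by rw [Finset.card_sdiff_of_subset hbx]; omega)
      have ha' : a ∈ x \ b := by rw [ha]; simp
      refine ⟨a, (Finset.mem_sdiff.1 ha').2, ?_⟩
      rw [← Finset.sdiff_union_of_subset hbx, ha]; rfl
    · rintro ⟨a, ha, rfl⟩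
      exact ⟨by rw [Finset.card_insert_of_notMem ha, hb], Finset.subset_insert _ _⟩
  rw [this, Finset.card_image_of_injOn, Finset.card_compl, Fintype.card_fin, hb]
  intro a ha a' ha' h
  simp only [Finset.coe_compl, Set.mem_compl_iff, Finset.mem_coe] at ha ha'
  have h' : a ∈ insert a' b := by
    have h := h; simp only [] at h; rw [← h]; exact Finset.mem_insert_self _ _
  rcases Finset.mem_insert.1 h' with h' | h'
  · exact h'
  · exact absurd h' ha

lemma card_pairs {n t : ℕ} (b : Finset (Fin n)) (hb : b.card = t) (J : Finset (Finset (Fin n))) :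
    ((Lay n (t + 2)).filter (fun y => b ⊆ y ∧
      ∀ x, b ⊆ x → x ⊆ y → x.card = t + 1 → x ∈ J)).card ≤ J.card.choose 2 := by
  rw [← Finset.card_powersetCard]
  have him : ∀ y : Finset (Fin n), b ⊆ y →
      (y.powerset.filter (fun x => b ⊆ x ∧ x.card = t + 1)) =
        (y \ b).image (fun a => insert a b) := by
    intro y hby
    ext x
    simp only [Finset.mem_filter, Finset.mem_powerset, Finset.mem_image, Finset.mem_sdiff]
    constructor
    · rintro ⟨hxy, hbx, hx⟩
      obtain ⟨a, ha⟩ := Finset.card_eq_one.1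
        (show (x \ b).card = 1 by rw [Finset.card_sdiff_of_subset hbx]; omega)
      have ha' : a ∈ x \ b := by rw [ha]; simp
      have ha'' := Finset.mem_sdiff.1 ha'
      refine ⟨a, ⟨hxy ha''.1, ha''.2⟩, ?_⟩
      rw [← Finset.sdiff_union_of_subset hbx, ha]; rfl
    · rintro ⟨a, ⟨ha, hab⟩, rfl⟩
      exact ⟨Finset.insert_subset ha hby, Finset.subset_insert _ _,
        by rw [Finset.card_insert_of_notMem hab, hb]⟩
  refine Finset.card_le_card_of_injOn
    (fun y => y.powerset.filter (fun x => b ⊆ x ∧ x.card = t + 1)) ?_ ?_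
  · intro y hy
    simp only [Finset.coe_filter, Set.mem_ofPred_eq, mem_Lay] at hy
    obtain ⟨hy, hby, hJ⟩ := hy
    rw [Finset.mem_coe, Finset.mem_powersetCard]
    constructor
    · intro x hx
      simp only [Finset.mem_filter, Finset.mem_powerset] at hx
      exact hJ x hx.2.1 hx.1 hx.2.2
    · simp only []
      rw [him y hby, Finset.card_image_of_injOn, Finset.card_sdiff_of_subset hby]
      · omega
      intro a ha a' ha' h
      simp only [Finset.coe_sdiff, Set.mem_sdiff, Finset.mem_coe] at ha ha'
      have h' : a ∈ insert a' b := by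
        have h := h; simp only [] at h; rw [← h]; exact Finset.mem_insert_self _ _
      rcases Finset.mem_insert.1 h' with h' | h'
      · exact h'
      · exact absurd h' ha.2
  · intro y hy y' hy' h
    simp only [Finset.coe_filter, Set.mem_ofPred_eq, mem_Lay] at hy hy'
    simp only [] at h
    have aux : ∀ y y' : Finset (Fin n), b ⊆ y → b ⊆ y' →
        y.powerset.filter (fun x => b ⊆ x ∧ x.card = t + 1) =
        y'.powerset.filter (fun x => b ⊆ x ∧ x.card = t + 1) → y ⊆ y' := by
      intro y y' hy hy' h a ha
      by_cases hab : a ∈ b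
      · exact hy' hab
      · have : insert a b ∈ y.powerset.filter (fun x => b ⊆ x ∧ x.card = t + 1) := by
          rw [him y hy]
          exact Finset.mem_image_of_mem _ (Finset.mem_sdiff.2 ⟨ha, hab⟩)
        rw [h] at this
        simp only [Finset.mem_filter, Finset.mem_powerset] at this
        exact this.1 (Finset.mem_insert_self _ _)
    exact Finset.Subset.antisymm (aux _ _ hy.2.1 hy'.2.1 h) (aux _ _ hy'.2.1 hy.2.1 h.symm)

lemma sum_loc {n t : ℕ} (U : Finset (Finset (Fin n))) (hU : U ⊆ Lay n (t + 2)) :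
    ∑ b ∈ Lay n t, ((U.filter (fun y => b ⊆ y)).shadow.filter (fun x => b ⊆ x)).card =
      (t + 1) * U.shadow.card := by
  have h1 : ∀ b ∈ Lay n t, ((U.filter (fun y => b ⊆ y)).shadow.filter (fun x => b ⊆ x)).card =
      (U.shadow.filter (fun x => b ⊆ x)).card := by
    intro b _
    congr 1
    ext x
    rw [Finset.mem_filter, Finset.mem_filter, mem_shadow' hU,
      mem_shadow' ((Finset.filter_subset _ _).trans hU)]
    constructor
    · rintro ⟨⟨h, y, hy, hxy⟩, hb⟩
      exact ⟨⟨h, y, (Finset.mem_filter.1 hy).1, hxy⟩, hb⟩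
    · rintro ⟨⟨h, y, hy, hxy⟩, hb⟩
      exact ⟨⟨h, y, Finset.mem_filter.2 ⟨hy, hb.trans hxy⟩, hxy⟩, hb⟩
  rw [Finset.sum_congr rfl h1]
  have h2 := Finset.sum_card_bipartiteAbove_eq_sum_card_bipartiteBelow
    (s := Lay n t) (t := U.shadow) (fun b x => b ⊆ x)
  simp only [Finset.bipartiteAbove, Finset.bipartiteBelow] at h2
  rw [h2, Finset.sum_congr rfl (g := fun _ => t + 1), Finset.sum_const, smul_eq_mul, mul_comm]
  intro x hx
  have hx := ((mem_shadow' hU).1 hx).1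
  have : (Lay n t).filter (fun b => b ⊆ x) = Finset.powersetCard t x := by
    ext b; simp [mem_Lay, Finset.mem_powersetCard, and_comm]
  rw [this, Finset.card_powersetCard, hx]; simp

/-- The layer partition function. -/
def PF (n k : ℕ) (c : ℝ) : ℝ :=
  ∑ U ∈ (Lay n k).powerset, (2 : ℝ) ^ (-(c * (U.shadow.card : ℝ)))

lemma PF_le {n t : ℕ} (c : ℝ) :
    PF n (t + 2) c ≤ ∏ b ∈ Lay n t,
      (∑ V ∈ ((Lay n (t + 2)).filter (fun y => b ⊆ y)).powerset,
        (2 : ℝ) ^ (-(c * (t + 2) / 2 * ((V.shadow.filter (fun x => b ⊆ x)).card : ℝ)))) ^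
          ((1 : ℝ) / ((t + 2).choose 2 : ℕ)) := by
  have hr : 0 < (t + 2).choose 2 := Nat.choose_pos (by omega)
  have := finner (Lay n t) (fun b y => b ⊆ y) ((t + 2).choose 2) hr (Lay n (t + 2)) ?_
    (fun b V => (2 : ℝ) ^ (-(c * (t + 2) / 2 * ((V.shadow.filter (fun x => b ⊆ x)).card : ℝ))))
    (fun b V => by positivity)
  · refine le_trans (le_of_eq ?_) this
    unfold PF
    refine Finset.sum_congr rfl fun U hU => ?_
    have hU := Finset.mem_powerset.1 hU
    have e : ∀ b, ((2 : ℝ) ^ (-(c * (t + 2) / 2 *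
        (((U.filter (fun y => b ⊆ y)).shadow.filter (fun x => b ⊆ x)).card : ℝ)))) ^
          ((1 : ℝ) / ((t + 2).choose 2 : ℕ)) =
        (2 : ℝ) ^ ((-(c * (t + 2) / 2) * ((1 : ℝ) / ((t + 2).choose 2 : ℕ))) *
        (((U.filter (fun y => b ⊆ y)).shadow.filter (fun x => b ⊆ x)).card : ℝ)) := by
      intro b
      rw [← Real.rpow_mul (by norm_num)]
      congr 1; ring
    rw [Finset.prod_congr rfl (fun b _ => e b), ← Real.rpow_sum_of_pos (by norm_num),
      ← Finset.mul_sum]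
    have h := sum_loc U hU
    have h' : ∑ b ∈ Lay n t,
      (((U.filter (fun y => b ⊆ y)).shadow.filter (fun x => b ⊆ x)).card : ℝ) =
      (t + 1) * U.shadow.card := by exact_mod_cast h
    rw [h']
    congr 1
    have : (((t + 2).choose 2 : ℕ) : ℝ) = (t + 2) * (t + 1) / 2 := by
      rw [Nat.cast_choose_two]; push_cast; ring
    rw [this]
    have : (t : ℝ) + 2 ≠ 0 := by positivity
    have : (t : ℝ) + 1 ≠ 0 := by positivity
    field_simp
  · intro y hy
    have hy := mem_Lay.1 hy
    have : (Lay n t).filter (fun b => b ⊆ y) = Finset.powersetCard t y := by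
      ext b; simp [mem_Lay, Finset.mem_powersetCard, and_comm]
    rw [this, Finset.card_powersetCard, hy]
    exact Nat.choose_symm_add

lemma local_le {n t : ℕ} (b : Finset (Fin n)) (hb : b.card = t) (d : ℝ) :
    ∑ V ∈ ((Lay n (t + 2)).filter (fun y => b ⊆ y)).powerset,
        (2 : ℝ) ^ (-(d * ((V.shadow.filter (fun x => b ⊆ x)).card : ℝ))) ≤
    ∑ J ∈ ((Lay n (t + 1)).filter (fun x => b ⊆ x)).powerset,
      (2 : ℝ) ^ ((J.card.choose 2 : ℕ) - d * (J.card : ℝ)) := by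
  rw [← Finset.sum_fiberwise_of_maps_to (g := fun V => V.shadow.filter (fun x => b ⊆ x))
    (t := ((Lay n (t + 1)).filter (fun x => b ⊆ x)).powerset)]
  · refine Finset.sum_le_sum fun J hJ => ?_
    rw [Finset.sum_congr rfl (g := fun _ => (2 : ℝ) ^ (-(d * (J.card : ℝ))))
      (fun U hU => by rw [(Finset.mem_filter.1 hU).2]), Finset.sum_const, nsmul_eq_mul,
      sub_eq_add_neg, Real.rpow_add (by norm_num), Real.rpow_natCast]
    refine mul_le_mul_of_nonneg_right ?_ (by positivity)
    have h1 : (((Lay n (t + 2)).filter (fun y => b ⊆ y)).powerset.filter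
        (fun V => V.shadow.filter (fun x => b ⊆ x) = J)) ⊆
        ((Lay n (t + 2)).filter (fun y => b ⊆ y ∧
          ∀ x, b ⊆ x → x ⊆ y → x.card = t + 1 → x ∈ J)).powerset := by
      intro V hV
      obtain ⟨hV, hVJ⟩ := Finset.mem_filter.1 hV
      have hV := Finset.mem_powerset.1 hV
      rw [Finset.mem_powerset]
      intro y hy
      have hy' := Finset.mem_filter.1 (hV hy)
      refine Finset.mem_filter.2 ⟨hy'.1, hy'.2, ?_⟩
      intro x hbx hxy hx
      rw [← hVJ, Finset.mem_filter, mem_shadow' (k := t + 1) (hV.trans (Finset.filter_subset _ _))]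
      exact ⟨⟨hx, y, hy, hxy⟩, hbx⟩
    have h2 := Finset.card_le_card h1
    rw [Finset.card_powerset] at h2
    have h3 := h2.trans (Nat.pow_le_pow_right (by norm_num) (card_pairs b hb J))
    exact_mod_cast h3
  · intro V hV
    have hV := Finset.mem_powerset.1 hV
    rw [Finset.mem_powerset]
    intro x hx
    rw [Finset.mem_filter, mem_shadow' (k := t + 1) (hV.trans (Finset.filter_subset _ _))] at hx
    exact Finset.mem_filter.2 ⟨mem_Lay.2 hx.1.1, hx.2⟩


lemma local_pointwise (m k M j : ℕ) (hm : 1 ≤ m) (hk : m + 1 ≤ k) (hk2 : k ≤ 2 * m)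
    (hM : M + k = 2 * m + 2) (hj : j ≤ M) :
    (2 : ℝ) ^ ((j.choose 2 : ℕ) - (1 - 1 / (4 * (m : ℝ))) * k / 2 * (j : ℝ)) ≤
      ((2 : ℝ) ^ (-(m : ℝ) / 8)) ^ j + ((2 : ℝ) ^ (-(m : ℝ) / 8)) ^ (M - j) *
        (2 : ℝ) ^ (-(m : ℝ) / 8) := by
  have hmR : (1 : ℝ) ≤ m := by exact_mod_cast hm
  have hkR : (m : ℝ) + 1 ≤ k := by exact_mod_cast hk
  have hk2R : (k : ℝ) ≤ 2 * m := by exact_mod_cast hk2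
  have hMR : (M : ℝ) + k = 2 * m + 2 := by exact_mod_cast hM
  have hjR : (j : ℝ) ≤ M := by exact_mod_cast hj
  have hj0 : (0 : ℝ) ≤ j := by positivity
  have hck : (k : ℝ) - 1 / 2 ≤ (1 - 1 / (4 * (m : ℝ))) * k := by
    have : 1 / (4 * (m : ℝ)) * k ≤ 1 / 2 := by
      rw [div_mul_eq_mul_div, div_le_iff₀ (by positivity)]; linarith
    linarith
  rw [Nat.cast_choose_two, ← pow_succ, ← Real.rpow_natCast, ← Real.rpow_natCast,
    ← Real.rpow_mul (by norm_num), ← Real.rpow_mul (by norm_num)]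
  set c : ℝ := (1 - 1 / (4 * (m : ℝ))) * k with hc
  have hv : (j : ℝ) * (j - 1) / 2 - c / 2 * j = -(j / 2 * (c - j + 1)) := by ring
  rw [hv]
  rcases le_or_gt (2 * j) (k + 1) with h | h
  · have hR : 2 * (j : ℝ) ≤ k + 1 := by exact_mod_cast h
    refine le_trans (Real.rpow_le_rpow_of_exponent_le (by norm_num) ?_)
      (le_add_of_nonneg_right (by positivity))
    have h1 : (m : ℝ) / 4 ≤ c - j + 1 := by linarith
    nlinarith [mul_le_mul_of_nonneg_left h1 hj0]
  · have hR : (k : ℝ) + 1 < 2 * j := by exact_mod_cast h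
    refine le_trans (Real.rpow_le_rpow_of_exponent_le (by norm_num) ?_)
      (le_add_of_nonneg_left (by positivity))
    push_cast [Nat.cast_sub hj]
    have h1 : ((M : ℝ) - j + 1) / 2 ≤ c - j + 1 := by linarith
    have h2 : (m : ℝ) / 2 ≤ j := by linarith
    have h3 : 0 ≤ ((M : ℝ) - j + 1) / 2 := by linarith
    have := mul_le_mul (show (m : ℝ) / 4 ≤ j / 2 by linarith) h1 h3 (by linarith)
    linarith

lemma local_sum (m k M : ℕ) (hm : 1 ≤ m) (hk : m + 1 ≤ k) (hk2 : k ≤ 2 * m)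
    (hM : M + k = 2 * m + 2) {α : Type*} (X : Finset α) (hX : X.card = M) :
    ∑ J ∈ X.powerset,
      (2 : ℝ) ^ ((J.card.choose 2 : ℕ) - (1 - 1 / (4 * (m : ℝ))) * k / 2 * (J.card : ℝ)) ≤
    Real.exp ((m + 2) * (2 : ℝ) ^ (-(m : ℝ) / 8)) := by
  set q : ℝ := (2 : ℝ) ^ (-(m : ℝ) / 8) with hq
  have hq0 : 0 < q := by positivity
  calc _ ≤ ∑ J ∈ X.powerset, (q ^ J.card * 1 ^ (X.card - J.card) +
        (1 ^ J.card * q ^ (X.card - J.card)) * q) := by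
        refine Finset.sum_le_sum fun J hJ => ?_
        have := local_pointwise m k M J.card hm hk hk2 hM
          (hX ▸ Finset.card_le_card (Finset.mem_powerset.1 hJ))
        rw [hX, one_pow, one_pow, one_mul, mul_one]
        exact this
    _ = (q + 1) ^ (M + 1) := by
        rw [Finset.sum_add_distrib, ← Finset.sum_mul, Finset.sum_pow_mul_eq_add_pow,
          Finset.sum_pow_mul_eq_add_pow, hX]; ring
    _ ≤ (q + 1) ^ (m + 2) := pow_le_pow_right₀ (by linarith) (by omega)
    _ ≤ (Real.exp q) ^ (m + 2) := pow_le_pow_left₀ (by linarith) (Real.add_one_le_exp q) _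
    _ = _ := by rw [← Real.exp_nat_mul]; push_cast; rfl

lemma PF_bound (m k : ℕ) (hm : 1 ≤ m) (hk : m + 1 ≤ k) (hk2 : k ≤ 2 * m) :
    PF (2 * m) k (1 - 1 / (4 * (m : ℝ))) ≤
      Real.exp ((m + 2) * (2 : ℝ) ^ (-(m : ℝ) / 8) * ((2 * m).choose m : ℕ)) := by
  obtain ⟨t, rfl⟩ : ∃ t, k = t + 2 := ⟨k - 2, by omega⟩
  set B : ℝ := (m + 2) * (2 : ℝ) ^ (-(m : ℝ) / 8) with hB
  have hB0 : 0 ≤ B := by positivity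
  refine (PF_le _).trans ?_
  calc _ ≤ ∏ _b ∈ Lay (2 * m) t, Real.exp B := by
        refine Finset.prod_le_prod (fun b _ => by positivity) fun b hb => ?_
        have hb := mem_Lay.1 hb
        have h1 := (local_le b hb ((1 - 1 / (4 * (m : ℝ))) * (t + 2) / 2)).trans
          (by
            have := local_sum m (t + 2) (2 * m - t) hm hk hk2 (by omega)
              ((Lay (2 * m) (t + 1)).filter (fun x => b ⊆ x)) (card_up b hb)
            push_cast at this
            exact this)
        have h2 : (1 : ℝ) / ((t + 2).choose 2 : ℕ) ≤ 1 := by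
          have : (1 : ℝ) ≤ ((t + 2).choose 2 : ℕ) := by
            exact_mod_cast Nat.choose_pos (by omega)
          rw [div_le_one (by linarith)]; exact this
        calc _ ≤ (Real.exp B) ^ ((1 : ℝ) / ((t + 2).choose 2 : ℕ)) :=
              Real.rpow_le_rpow (by positivity) h1 (by positivity)
          _ ≤ (Real.exp B) ^ (1 : ℝ) :=
              Real.rpow_le_rpow_of_exponent_le (Real.one_le_exp hB0) h2
          _ = _ := Real.rpow_one _
    _ = Real.exp (((2 * m).choose t : ℕ) * B) := by
        rw [Finset.prod_const, card_Lay, Real.exp_nat_mul]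
    _ ≤ _ := by
        apply Real.exp_le_exp.2
        rw [mul_comm]
        refine mul_le_mul_of_nonneg_left ?_ hB0
        have := Nat.choose_le_middle t (2 * m)
        rw [Nat.mul_div_cancel_left m (by norm_num)] at this
        exact_mod_cast this

/-- Families of sets of size at least `k`, closed downwards within sizes at least `k`. -/
def Up (n k : ℕ) : Finset (Finset (Finset (Fin n))) :=
  Finset.univ.filter (fun A => (∀ x ∈ A, k ≤ x.card) ∧
    ∀ x ∈ A, ∀ y, y ⊆ x → k ≤ y.card → y ∈ A)

lemma mem_Up {n k : ℕ} {A : Finset (Finset (Fin n))} : A ∈ Up n k ↔ (∀ x ∈ A, k ≤ x.card) ∧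
    ∀ x ∈ A, ∀ y, y ⊆ x → k ≤ y.card → y ∈ A := by
  simp [Up]

/-- The shadow of the bottom layer. -/
def sh {n : ℕ} (k : ℕ) (A : Finset (Finset (Fin n))) : Finset (Finset (Fin n)) :=
  (A.filter (fun x => x.card = k)).shadow

def SU (n k : ℕ) (c : ℝ) : ℝ := ∑ A ∈ Up n k, (2 : ℝ) ^ (-(c * ((sh k A).card : ℝ)))

lemma filter_Lay {n : ℕ} (k : ℕ) (A : Finset (Finset (Fin n))) :
    A.filter (fun x => x.card = k) ⊆ Lay n k := fun _ hx => mem_Lay.2 (Finset.mem_filter.1 hx).2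

lemma mem_sh {n k : ℕ} {A : Finset (Finset (Fin n))} {x : Finset (Fin n)} :
    x ∈ sh (k + 1) A ↔ x.card = k ∧ ∃ y ∈ A, y.card = k + 1 ∧ x ⊆ y := by
  unfold sh
  rw [mem_shadow' (filter_Lay _ _)]
  simp only [Finset.mem_filter, and_assoc]

lemma SU_step (n k : ℕ) (c : ℝ) (hc0 : 0 ≤ c) (hc : c ≤ 1) :
    SU n k c ≤ PF n k c * SU n (k + 1) c := by
  unfold SU
  have hmaps : ∀ A ∈ Up n k, A.filter (fun x => k + 1 ≤ x.card) ∈ Up n (k + 1) := by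
    intro A hA
    have hA := mem_Up.1 hA
    rw [mem_Up]
    constructor
    · intro x hx; exact (Finset.mem_filter.1 hx).2
    · intro x hx y hyx hy
      exact Finset.mem_filter.2 ⟨hA.2 x (Finset.mem_filter.1 hx).1 y hyx (by omega), hy⟩
  rw [← Finset.sum_fiberwise_of_maps_to hmaps, Finset.mul_sum]
  refine Finset.sum_le_sum fun A' hA' => ?_
  have hA'' := mem_Up.1 hA'
  set C := sh (k + 1) A' with hC
  have hCL : C ⊆ Lay n k := fun x hx => mem_Lay.2 (mem_sh.1 hx).1
  have h1 : ∑ A ∈ (Up n k).filter (fun A => A.filter (fun x => k + 1 ≤ x.card) = A'),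
      (2 : ℝ) ^ (-(c * ((sh k A).card : ℝ))) ≤
      ∑ Y ∈ (Lay n k).powerset.filter (fun Y => C ⊆ Y),
        (2 : ℝ) ^ (-(c * (Y.shadow.card : ℝ))) := by
    change ∑ A ∈ (Up n k).filter (fun A => A.filter (fun x => k + 1 ≤ x.card) = A'),
      (2 : ℝ) ^ (-(c * ((A.filter (fun x => x.card = k)).shadow.card : ℝ))) ≤ _
    rw [← Finset.sum_image (s := (Up n k).filter (fun A => A.filter (fun x => k + 1 ≤ x.card) = A'))
      (g := fun A => A.filter (fun x => x.card = k))
      (f := fun Y => (2 : ℝ) ^ (-(c * (Y.shadow.card : ℝ))))]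
    · refine Finset.sum_le_sum_of_subset_of_nonneg ?_ (fun _ _ _ => by positivity)
      intro Y hY
      obtain ⟨A, hA, rfl⟩ := Finset.mem_image.1 hY
      obtain ⟨hA, hAA⟩ := Finset.mem_filter.1 hA
      have hA := mem_Up.1 hA
      refine Finset.mem_filter.2 ⟨Finset.mem_powerset.2 (filter_Lay _ _), ?_⟩
      intro x hx
      obtain ⟨hx, y, hy, hyc, hxy⟩ := mem_sh.1 hx
      rw [← hAA] at hy
      exact Finset.mem_filter.2 ⟨hA.2 y (Finset.mem_filter.1 hy).1 x hxy (by omega), hx⟩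
    · intro A hA B hB h
      obtain ⟨hA, hAA⟩ := Finset.mem_filter.1 (Finset.mem_coe.1 hA)
      obtain ⟨hB, hBB⟩ := Finset.mem_filter.1 (Finset.mem_coe.1 hB)
      have hA := (mem_Up.1 hA).1
      have hB := (mem_Up.1 hB).1
      simp only [] at h
      ext x
      have e1 := Finset.ext_iff.1 (hAA.trans hBB.symm) x
      have e2 := Finset.ext_iff.1 h x
      simp only [Finset.mem_filter] at e1 e2
      constructor
      · intro hx
        have := hA x hx
        rcases Nat.lt_or_ge k x.card with h | h
        · exact (e1.1 ⟨hx, h⟩).1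
        · exact (e2.1 ⟨hx, by omega⟩).1
      · intro hx
        have := hB x hx
        rcases Nat.lt_or_ge k x.card with h | h
        · exact (e1.2 ⟨hx, h⟩).1
        · exact (e2.2 ⟨hx, by omega⟩).1
  refine h1.trans ?_
  have h2 := superset_sum (Lay n k) C hCL (fun Y => (2 : ℝ) ^ (-(c * (Y.shadow.card : ℝ))))
    (fun U V hUV => by
      refine Real.rpow_le_rpow_of_exponent_le (by norm_num) ?_
      have : (U.shadow.card : ℝ) ≤ V.shadow.card := by
        exact_mod_cast Finset.card_le_card (shadow_mono' hUV)
      nlinarith)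
  rw [← le_div_iff₀ (by positivity)] at h2
  refine h2.trans ?_
  rw [div_eq_mul_inv]
  refine mul_le_mul_of_nonneg_left ?_ (Finset.sum_nonneg fun _ _ => by positivity)
  rw [← Real.rpow_natCast, ← Real.rpow_neg (by norm_num)]
  refine Real.rpow_le_rpow_of_exponent_le (by norm_num) ?_
  have : (0 : ℝ) ≤ C.card := by positivity
  nlinarith

lemma SU_top (n k : ℕ) (hk : n < k) (c : ℝ) : SU n k c = 1 := by
  have : Up n k = {∅} := by
    ext A
    rw [mem_Up, Finset.mem_singleton]
    constructor
    · rintro ⟨h, -⟩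
      rw [Finset.eq_empty_iff_forall_notMem]
      intro x hx
      have := h x hx
      have := Finset.card_le_univ x
      rw [Fintype.card_fin] at this
      omega
    · rintro rfl; simp
  simp [SU, this, sh]

lemma SU_bound (m : ℕ) (hm : 1 ≤ m) : ∀ j : ℕ, j ≤ m →
    SU (2 * m) (2 * m + 1 - j) (1 - 1 / (4 * (m : ℝ))) ≤
      Real.exp ((m + 2) * (2 : ℝ) ^ (-(m : ℝ) / 8) * ((2 * m).choose m : ℕ)) ^ j := by
  intro j
  have hmR : (1 : ℝ) ≤ m := by exact_mod_cast hm
  have hc : 1 / (4 * (m : ℝ)) ≤ 1 := by rw [div_le_one (by positivity)]; linarith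
  have hc' : 0 ≤ 1 / (4 * (m : ℝ)) := by positivity
  induction j with
  | zero => intro _; rw [SU_top _ _ (by omega)]; simp
  | succ j ih =>
    intro hj
    have ih := ih (by omega)
    have h1 := SU_step (2 * m) (2 * m + 1 - (j + 1)) (1 - 1 / (4 * (m : ℝ))) (by linarith)
      (by linarith)
    rw [show 2 * m + 1 - (j + 1) + 1 = 2 * m + 1 - j by omega] at h1
    refine h1.trans ?_
    rw [pow_succ, mul_comm]
    refine mul_le_mul ih (PF_bound m _ hm (by omega) (by omega)) ?_ (by positivity)
    exact Finset.sum_nonneg fun _ _ => by positivity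


lemma count_super {α : Type*} [DecidableEq α] (E T : Finset α) (hT : T ⊆ E) :
    ((E.powerset.filter (fun S => T ⊆ S)).card : ℝ) = 2 ^ E.card / 2 ^ T.card := by
  have h : E.powerset.filter (fun S => T ⊆ S) = Finset.Icc T E := by
    ext S; simp [and_comm]
  rw [h, Finset.card_Icc_finset hT, Nat.cast_pow, Nat.cast_ofNat,
    pow_sub₀ _ (by norm_num) (Finset.card_le_card hT), div_eq_mul_inv]

lemma inter_le_one {n m : ℕ} (x x' : Finset (Fin n)) (hx : x.card = m + 1) (hx' : x'.card = m + 1)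
    (hne : x ≠ x') : (x.powersetCard m ∩ x'.powersetCard m).card ≤ 1 := by
  rw [Finset.card_le_one]
  intro y hy y' hy'
  simp only [Finset.mem_inter, Finset.mem_powersetCard] at hy hy'
  by_contra h
  have h1 : y ∪ y' ⊆ x ∩ x' := Finset.union_subset (Finset.subset_inter hy.1.1 hy.2.1)
    (Finset.subset_inter hy'.1.1 hy'.2.1)
  have h2 : m + 1 ≤ (y ∪ y').card := by
    by_contra h3
    have e1 : y = y ∪ y' := Finset.eq_of_subset_of_card_le Finset.subset_union_left (by omega)
    have e2 : y' = y ∪ y' := Finset.eq_of_subset_of_card_le Finset.subset_union_right (by omega)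
    exact h (e1.trans e2.symm)
  have h4 := h2.trans (Finset.card_le_card h1)
  have e1 : x ∩ x' = x := Finset.eq_of_subset_of_card_le Finset.inter_subset_left (by omega)
  have e2 : x ∩ x' = x' := Finset.eq_of_subset_of_card_le Finset.inter_subset_right (by omega)
  exact hne (e1.symm.trans e2)

lemma mul_le_two_pow (m : ℕ) : (m + 1) * m ≤ 2 * 2 ^ m := by
  induction m with
  | zero => simp
  | succ k ih =>
    rcases Nat.lt_or_ge k 2 with h | h
    · interval_cases k <;> norm_num
    · rw [pow_succ]; nlinarith

/-- Number of members of `G` all of whose `m`-subsets lie in `S`. -/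
def Zc {n : ℕ} (m : ℕ) (G S : Finset (Finset (Fin n))) : ℕ :=
  (G.filter (fun x => x.powersetCard m ⊆ S)).card

lemma pair_bound {m : ℕ} (x x' : Finset (Fin (2 * m))) (hx : x.card = m + 1)
    (hx' : x'.card = m + 1) :
    (1 : ℝ) / 2 ^ (x.powersetCard m ∪ x'.powersetCard m).card ≤
      1 / 2 ^ (m + 1) * (1 / 2 ^ (m + 1)) + (if x = x' then 1 / 2 ^ (m + 1) else 0) +
      (if ¬ Disjoint (x.powersetCard m) (x'.powersetCard m) then
        1 / 2 ^ (m + 1) * (1 / 2 ^ m) else 0) := by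
  have c1 : (x.powersetCard m).card = m + 1 := by simp [hx]
  have c2 : (x'.powersetCard m).card = m + 1 := by simp [hx']
  by_cases h : x = x'
  · subst h
    rw [Finset.union_self, c1, if_pos rfl]
    have : (0 : ℝ) ≤ 1 / 2 ^ (m + 1) * (1 / 2 ^ (m + 1)) := by positivity
    have : (0 : ℝ) ≤ (if ¬ Disjoint (x.powersetCard m) (x.powersetCard m) then
        1 / 2 ^ (m + 1) * (1 / 2 ^ m) else 0) := by split_ifs <;> positivity
    linarith
  · rw [if_neg h]
    by_cases hd : Disjoint (x.powersetCard m) (x'.powersetCard m)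
    · rw [Finset.card_union_of_disjoint hd, c1, c2, pow_add]
      simp only [hd, not_true_eq_false, if_false, add_zero]
      rw [one_div_mul_one_div]
    · rw [if_pos hd]
      have h1 := inter_le_one x x' hx hx' h
      have h2 := Finset.card_union_add_card_inter (x.powersetCard m) (x'.powersetCard m)
      have h3 : (1 : ℝ) / 2 ^ (x.powersetCard m ∪ x'.powersetCard m).card ≤
          1 / 2 ^ (m + 1 + m) :=
        one_div_le_one_div_of_le (by positivity) (pow_le_pow_right₀ (by norm_num) (by omega))
      have h4 : (0 : ℝ) ≤ 1 / 2 ^ (m + 1) * (1 / 2 ^ (m + 1)) := by positivity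
      rw [pow_add, ← one_div_mul_one_div] at h3
      linarith

lemma cheb (m : ℕ) (G : Finset (Finset (Fin (2 * m)))) (hG : G ⊆ Lay (2 * m) (m + 1))
    (ε : ℝ) (hε : 0 < ε) :
    ((((Lay (2 * m) m).powerset.filter
      (fun S => (Zc m G S : ℝ) < (1 - ε) * ((G.card : ℝ) / 2 ^ (m + 1)))).card : ℝ)) *
      (ε ^ 2 * ((G.card : ℝ) / 2 ^ (m + 1)) ^ 2) ≤
    3 * ((G.card : ℝ) / 2 ^ (m + 1)) * 2 ^ ((2 * m).choose m) := by
  set E := Lay (2 * m) m with hE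
  have hEc : E.card = (2 * m).choose m := card_Lay _ _
  set μ : ℝ := (G.card : ℝ) / 2 ^ (m + 1) with hμ
  have hμ0 : 0 ≤ μ := by positivity
  have hsub : ∀ x : Finset (Fin (2 * m)), x.powersetCard m ⊆ E := by
    intro x y hy; exact mem_Lay.2 (Finset.mem_powersetCard.1 hy).2
  have hxc : ∀ x ∈ G, (x.powersetCard m).card = m + 1 := by
    intro x hx; simp [mem_Lay.1 (hG hx)]
  have hZ : ∀ S, (Zc m G S : ℝ) = ∑ x ∈ G, if x.powersetCard m ⊆ S then (1 : ℝ) else 0 := by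
    intro S; simp [Zc]
  have s1 : ∑ S ∈ E.powerset, (Zc m G S : ℝ) = μ * 2 ^ E.card := by
    simp_rw [hZ]
    rw [Finset.sum_comm]
    rw [Finset.sum_congr rfl (g := fun _ => (2 : ℝ) ^ E.card / 2 ^ (m + 1))]
    · rw [Finset.sum_const, nsmul_eq_mul, hμ]; ring
    · intro x hx
      rw [Finset.sum_boole, count_super _ _ (hsub x), hxc x hx]
  have s2 : ∑ S ∈ E.powerset, (Zc m G S : ℝ) ^ 2 ≤ (μ ^ 2 + 3 * μ) * 2 ^ E.card := by
    have e : ∑ S ∈ E.powerset, (Zc m G S : ℝ) ^ 2 =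
        ∑ x ∈ G, ∑ x' ∈ G, 2 ^ E.card *
          ((1 : ℝ) / 2 ^ (x.powersetCard m ∪ x'.powersetCard m).card) := by
      simp_rw [hZ, sq, Finset.sum_mul_sum]
      rw [Finset.sum_comm]
      refine Finset.sum_congr rfl fun x hx => ?_
      rw [Finset.sum_comm]
      refine Finset.sum_congr rfl fun x' hx' => ?_
      rw [mul_one_div, ← count_super _ _ (Finset.union_subset (hsub x) (hsub x')),
        ← Finset.sum_boole]
      refine Finset.sum_congr rfl fun S _ => ?_
      by_cases h1 : x.powersetCard m ⊆ S <;> by_cases h2 : x'.powersetCard m ⊆ S <;>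
        simp [h1, h2, Finset.union_subset_iff]
    rw [e]
    have hin : ∀ x ∈ G, ∑ x' ∈ G, 2 ^ E.card *
          ((1 : ℝ) / 2 ^ (x.powersetCard m ∪ x'.powersetCard m).card) ≤
        2 ^ E.card * (1 / 2 ^ (m + 1) * (μ + 3)) := by
      intro x hx
      rw [← Finset.mul_sum]
      refine mul_le_mul_of_nonneg_left ?_ (by positivity)
      have hx1 := mem_Lay.1 (hG hx)
      refine (Finset.sum_le_sum fun x' hx' =>
        pair_bound x x' hx1 (mem_Lay.1 (hG hx'))).trans ?_
      rw [Finset.sum_add_distrib, Finset.sum_add_distrib, Finset.sum_const, nsmul_eq_mul,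
        Finset.sum_ite_eq, if_pos hx, ← Finset.sum_filter, Finset.sum_const, nsmul_eq_mul]
      have hc : (G.filter (fun x' => ¬ Disjoint (x.powersetCard m) (x'.powersetCard m))).card ≤
          (m + 1) * m := by
        have : G.filter (fun x' => ¬ Disjoint (x.powersetCard m) (x'.powersetCard m)) ⊆
            (x.powersetCard m).biUnion
              (fun y => (Lay (2 * m) (m + 1)).filter (fun x' => y ⊆ x')) := by
          intro x' hx'
          obtain ⟨hx', hd⟩ := Finset.mem_filter.1 hx'
          obtain ⟨y, hy, hy'⟩ := Finset.not_disjoint_iff.1 hd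
          exact Finset.mem_biUnion.2 ⟨y, hy, Finset.mem_filter.2
            ⟨hG hx', (Finset.mem_powersetCard.1 hy').1⟩⟩
        refine (Finset.card_le_card this).trans ?_
        have h2 := Finset.card_biUnion_le_card_mul (x.powersetCard m)
          (fun y => (Lay (2 * m) (m + 1)).filter (fun x' => y ⊆ x')) m (fun y hy => by
            rw [card_up y (Finset.mem_powersetCard.1 hy).2]; omega)
        rw [hxc x hx] at h2
        exact h2
      have hc2 : ((G.filter (fun x' => ¬ Disjoint (x.powersetCard m)
          (x'.powersetCard m))).card : ℝ) * (1 / 2 ^ m) ≤ 2 := by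
        rw [mul_one_div, div_le_iff₀ (by positivity)]
        exact_mod_cast hc.trans (mul_le_two_pow m)
      have hp : (0 : ℝ) ≤ 1 / 2 ^ (m + 1) := by positivity
      have hμ' : (G.card : ℝ) * (1 / 2 ^ (m + 1)) = μ := by rw [hμ]; ring
      calc _ = 1 / 2 ^ (m + 1) * ((G.card : ℝ) * (1 / 2 ^ (m + 1)) + 1 +
            ((G.filter (fun x' => ¬ Disjoint (x.powersetCard m)
          (x'.powersetCard m))).card : ℝ) * (1 / 2 ^ m)) := by ring
        _ ≤ _ := by
          refine mul_le_mul_of_nonneg_left ?_ hp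
          rw [hμ']; linarith
    refine (Finset.sum_le_sum hin).trans (le_of_eq ?_)
    rw [Finset.sum_const, nsmul_eq_mul, hμ]; ring
  have s3 : ∑ S ∈ E.powerset, ((Zc m G S : ℝ) - μ) ^ 2 ≤ 3 * μ * 2 ^ E.card := by
    have : ∑ S ∈ E.powerset, ((Zc m G S : ℝ) - μ) ^ 2 =
        ∑ S ∈ E.powerset, (Zc m G S : ℝ) ^ 2 - 2 * μ * ∑ S ∈ E.powerset, (Zc m G S : ℝ)
          + μ ^ 2 * 2 ^ E.card := by
      have h0 : μ ^ 2 * 2 ^ E.card = ∑ S ∈ E.powerset, μ ^ 2 := by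
        rw [Finset.sum_const, Finset.card_powerset, nsmul_eq_mul]; push_cast; ring
      rw [h0, Finset.mul_sum, ← Finset.sum_sub_distrib, ← Finset.sum_add_distrib]
      exact Finset.sum_congr rfl fun S _ => by ring
    rw [this, s1]; nlinarith
  rw [← hEc]
  refine le_trans ?_ s3
  rw [← nsmul_eq_mul, ← Finset.sum_const]
  refine le_trans (Finset.sum_le_sum fun S hS => ?_)
    (Finset.sum_le_sum_of_subset_of_nonneg (Finset.filter_subset _ _)
      (fun _ _ _ => sq_nonneg _))
  have h := (Finset.mem_filter.1 hS).2
  have h1 : 0 ≤ ε * μ := by positivity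
  have h2 : ε * μ ≤ μ - Zc m G S := by linarith
  have := mul_self_le_mul_self h1 h2
  nlinarith


def lowF (m : ℕ) (R : Finset (Finset (Fin (2 * m)))) : Finset (Finset (Fin (2 * m))) :=
  Finset.univ.filter (fun w => m + 1 ≤ w.card ∧ wᶜ.Nonempty ∧ wᶜ ∉ R)

def upF (m : ℕ) (R : Finset (Finset (Fin (2 * m)))) : Finset (Finset (Fin (2 * m))) :=
  R.filter (fun x => m + 1 ≤ x.card)

def CA (m : ℕ) (R : Finset (Finset (Fin (2 * m)))) : Finset (Finset (Fin (2 * m))) := sh (m + 1) R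

def CB (m : ℕ) (R : Finset (Finset (Fin (2 * m)))) : Finset (Finset (Fin (2 * m))) :=
  (sh (m + 1) (lowF m R)).image (fun x => xᶜ)

def restF (m : ℕ) (R : Finset (Finset (Fin (2 * m)))) : Finset (Finset (Fin (2 * m))) :=
  R.filter (fun x => x.card ≠ m)

lemma mem_CA {m : ℕ} {R : Finset (Finset (Fin (2 * m)))} {x : Finset (Fin (2 * m))} :
    x ∈ CA m R ↔ x.card = m ∧ ∃ y ∈ R, y.card = m + 1 ∧ x ⊆ y := mem_sh

lemma mem_CB {m : ℕ} {R : Finset (Finset (Fin (2 * m)))} {x : Finset (Fin (2 * m))} :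
    x ∈ CB m R ↔ x.card = m ∧ ∃ z, z ⊆ x ∧ z.card + 1 = m ∧ z.Nonempty ∧ z ∉ R := by
  have hcc : ∀ w : Finset (Fin (2 * m)), w.card + wᶜ.card = 2 * m := by
    intro w; rw [Finset.card_add_card_compl, Fintype.card_fin]
  unfold CB
  rw [Finset.mem_image]
  constructor
  · rintro ⟨u, hu, rfl⟩
    obtain ⟨hu, w, hw, hwc, huw⟩ := mem_sh.1 hu
    simp only [lowF, Finset.mem_filter, Finset.mem_univ, true_and] at hw
    have := hcc u; have := hcc w
    exact ⟨by omega, wᶜ, Finset.compl_subset_compl.2 huw, by omega, hw.2.1, hw.2.2⟩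
  · rintro ⟨hx, z, hzx, hz, hne, hzR⟩
    refine ⟨xᶜ, ?_, compl_compl x⟩
    have := hcc x; have := hcc z
    refine mem_sh.2 ⟨by omega, zᶜ, ?_, by omega, Finset.compl_subset_compl.2 hzx⟩
    simp only [lowF, Finset.mem_filter, Finset.mem_univ, true_and, compl_compl]
    exact ⟨by omega, hne, hzR⟩

lemma card_CB (m : ℕ) (R : Finset (Finset (Fin (2 * m)))) :
    (CB m R).card = (sh (m + 1) (lowF m R)).card :=
  Finset.card_image_of_injective _ compl_injective

lemma sh_upF (m : ℕ) (R : Finset (Finset (Fin (2 * m)))) : sh (m + 1) (upF m R) = CA m R := by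
  ext x
  unfold CA
  rw [mem_sh, mem_sh]
  simp only [upF, Finset.mem_filter]
  constructor
  · rintro ⟨h, y, hy, h'⟩; exact ⟨h, y, hy.1, h'⟩
  · rintro ⟨h, y, hy, h'⟩; exact ⟨h, y, ⟨hy, by omega⟩, h'⟩

lemma upF_mem {m : ℕ} {Δ : Finset (Finset (Fin (2 * m)))} (h : IsComplex Δ) :
    upF m (restF m Δ) ∈ Up (2 * m) (m + 1) := by
  rw [mem_Up]
  simp only [upF, restF, Finset.mem_filter]
  refine ⟨fun x hx => hx.2, fun x hx y hyx hy => ⟨⟨h.2 x hx.1.1 y ?_ hyx, by omega⟩, hy⟩⟩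
  rw [← Finset.card_pos]; omega

lemma lowF_mem {m : ℕ} {Δ : Finset (Finset (Fin (2 * m)))} (h : IsComplex Δ) :
    lowF m (restF m Δ) ∈ Up (2 * m) (m + 1) := by
  have hcc : ∀ w : Finset (Fin (2 * m)), w.card + wᶜ.card = 2 * m := by
    intro w; rw [Finset.card_add_card_compl, Fintype.card_fin]
  rw [mem_Up]
  simp only [lowF, restF, Finset.mem_filter, Finset.mem_univ, true_and]
  refine ⟨fun x hx => hx.1, fun x hx y hyx hy => ⟨hy, ?_, ?_⟩⟩
  · exact hx.2.1.mono (Finset.compl_subset_compl.2 hyx)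
  · rintro ⟨h1, h2⟩
    apply hx.2.2
    have := hcc x
    exact ⟨h.2 _ h1 _ hx.2.1 (Finset.compl_subset_compl.2 hyx), by omega⟩

lemma restF_inj {m : ℕ} {Δ Δ' : Finset (Finset (Fin (2 * m)))} (h : IsComplex Δ)
    (h' : IsComplex Δ') (hu : upF m (restF m Δ) = upF m (restF m Δ'))
    (hl : lowF m (restF m Δ) = lowF m (restF m Δ')) : restF m Δ = restF m Δ' := by
  have hcc : ∀ w : Finset (Fin (2 * m)), w.card + wᶜ.card = 2 * m := by
    intro w; rw [Finset.card_add_card_compl, Fintype.card_fin]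
  ext x
  have e1 := Finset.ext_iff.1 hu x
  have e2 := Finset.ext_iff.1 hl xᶜ
  have := hcc x
  by_cases hx : x.card = m
  · simp [restF, hx]
  rcases Nat.lt_or_ge x.card m with h1 | h1
  · by_cases hne : x.Nonempty
    · have hh : m + 1 ≤ xᶜ.card := by omega
      simp only [lowF, Finset.mem_filter, Finset.mem_univ, true_and, compl_compl, hh, hne] at e2
      exact not_iff_not.1 e2
    · have a1 : x ∉ Δ := fun hh => hne (h.1 x hh)
      have a2 : x ∉ Δ' := fun hh => hne (h'.1 x hh)
      simp [restF, a1, a2]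
  · have hh : m + 1 ≤ x.card := by omega
    simpa only [upF, Finset.mem_filter, hh, and_true] using e1

lemma fiber_iff {m : ℕ} (hm : 2 ≤ m) {Δ : Finset (Finset (Fin (2 * m)))} (h : IsComplex Δ)
    (D : Finset (Finset (Fin (2 * m)))) (hD : D ⊆ Lay (2 * m) m) :
    IsComplex (restF m Δ ∪ D) ↔ CA m (restF m Δ) ⊆ D ∧ Disjoint D (CB m (restF m Δ)) := by
  constructor
  · intro hc
    constructor
    · intro x hx
      obtain ⟨hx, y, hy, hyc, hxy⟩ := mem_CA.1 hx
      have := hc.2 y (Finset.mem_union_left _ hy) x (by rw [← Finset.card_pos]; omega) hxy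
      rcases Finset.mem_union.1 this with h1 | h1
      · exact absurd hx (Finset.mem_filter.1 h1).2
      · exact h1
    · rw [Finset.disjoint_left]
      intro x hx hxB
      obtain ⟨hxc, z, hzx, hz, hne, hzR⟩ := mem_CB.1 hxB
      have := hc.2 x (Finset.mem_union_right _ hx) z hne hzx
      rcases Finset.mem_union.1 this with h1 | h1
      · exact hzR h1
      · have := mem_Lay.1 (hD h1); omega
  · rintro ⟨hA, hB⟩
    constructor
    · intro x hx
      rcases Finset.mem_union.1 hx with h1 | h1
      · exact h.1 x (Finset.mem_filter.1 h1).1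
      · rw [← Finset.card_pos, mem_Lay.1 (hD h1)]; omega
    · intro x hx y hne hyx
      rcases Finset.mem_union.1 hx with h1 | h1
      · obtain ⟨h1, h2⟩ := Finset.mem_filter.1 h1
        have hy := h.2 x h1 y hne hyx
        by_cases hyc : y.card = m
        · apply Finset.mem_union_right
          apply hA
          have hlt : y.card < x.card := by
            have := Finset.card_le_card hyx; omega
          obtain ⟨u, hyu, hux, hu⟩ := Finset.exists_subsuperset_card_eq hyx
            (show y.card ≤ m + 1 by omega) (show m + 1 ≤ x.card by omega)
          refine mem_CA.2 ⟨hyc, u, Finset.mem_filter.2 ⟨h.2 x h1 u (hne.mono hyu) hux, by omega⟩,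
            hu, hyu⟩
        · exact Finset.mem_union_left _ (Finset.mem_filter.2 ⟨hy, hyc⟩)
      · have hxc := mem_Lay.1 (hD h1)
        by_cases hyx' : y = x
        · rw [hyx']; exact Finset.mem_union_right _ h1
        have hlt : y.card < x.card := Finset.card_lt_card
          (Finset.ssubset_iff_subset_ne.2 ⟨hyx, hyx'⟩)
        obtain ⟨z, hyz, hzx, hz⟩ := Finset.exists_subsuperset_card_eq hyx
            (show y.card ≤ m - 1 by omega) (show m - 1 ≤ x.card by omega)
        have hzR : z ∈ restF m Δ := by
          by_contra hzR
          exact Finset.disjoint_left.1 hB h1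
            (mem_CB.2 ⟨hxc, z, hzx, by omega, hne.mono hyz, hzR⟩)
        exact Finset.mem_union_left _ (Finset.mem_filter.2
          ⟨h.2 z (Finset.mem_filter.1 hzR).1 y hne hyz, by omega⟩)

lemma rest_union {m : ℕ} (Δ : Finset (Finset (Fin (2 * m)))) :
    restF m Δ ∪ Δ.filter (fun x => x.card = m) = Δ := by
  ext x; simp only [restF, Finset.mem_union, Finset.mem_filter]; tauto

lemma CA_CB_disj {m : ℕ} (hm : 2 ≤ m) {Δ : Finset (Finset (Fin (2 * m)))} (h : IsComplex Δ) :
    Disjoint (CB m (restF m Δ)) (CA m (restF m Δ)) := by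
  have h1 := (fiber_iff hm h (Δ.filter (fun x => x.card = m)) (filter_Lay _ _)).1
    (by rw [rest_union]; exact h)
  exact (h1.2.mono_left h1.1).symm

lemma fiber_card {m : ℕ} (hm : 2 ≤ m) {Δ : Finset (Finset (Fin (2 * m)))} (h : IsComplex Δ)
    (Q : Finset (Finset (Fin (2 * m))) → Prop) :
    ((allComplexes (2 * m)).filter (fun Δ' => restF m Δ' = restF m Δ ∧ Q Δ')).card *
      2 ^ ((CB m (restF m Δ)).card + (CA m (restF m Δ)).card) =
    ((Lay (2 * m) m).powerset.filter (fun S => Q (restF m Δ ∪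
      ((S \ CB m (restF m Δ)) ∪ CA m (restF m Δ))))).card := by
  rw [← resample_card (Lay (2 * m) m) (CB m (restF m Δ)) (CA m (restF m Δ))
    (fun x hx => mem_Lay.2 (mem_CB.1 hx).1) (fun x hx => mem_Lay.2 (mem_CA.1 hx).1)
    (CA_CB_disj hm h) (fun D => Q (restF m Δ ∪ D))]
  congr 1
  symm
  have hrest : ∀ D ⊆ Lay (2 * m) m, restF m (restF m Δ ∪ D) = restF m Δ := by
    intro D hD
    ext x
    have : x ∈ D → x.card = m := fun hx => mem_Lay.1 (hD hx)
    simp only [restF, Finset.mem_union, Finset.mem_filter]; tauto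
  refine Finset.card_bij (fun D _ => restF m Δ ∪ D) ?_ ?_ ?_
  · intro D hD
    obtain ⟨hD, hh, hQ⟩ := Finset.mem_filter.1 hD
    have hD := Finset.mem_powerset.1 hD
    refine Finset.mem_filter.2 ⟨?_, hrest D hD, hQ⟩
    exact Finset.mem_filter.2 ⟨Finset.mem_univ _, (fiber_iff hm h D hD).2 hh⟩
  · intro D hD D' hD' he
    have hD := Finset.mem_powerset.1 (Finset.mem_filter.1 hD).1
    have hD' := Finset.mem_powerset.1 (Finset.mem_filter.1 hD').1
    ext x
    have e := Finset.ext_iff.1 he x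
    have : x ∈ D → x.card = m := fun hx => mem_Lay.1 (hD hx)
    have : x ∈ D' → x.card = m := fun hx => mem_Lay.1 (hD' hx)
    simp only [restF, Finset.mem_union, Finset.mem_filter] at e; tauto
  · intro Δ' hΔ'
    obtain ⟨hc, hr, hQ⟩ := Finset.mem_filter.1 hΔ'
    have hc := (Finset.mem_filter.1 hc).2
    have he : restF m Δ ∪ Δ'.filter (fun x => x.card = m) = Δ' := by
      rw [← hr, rest_union]
    refine ⟨Δ'.filter (fun x => x.card = m), ?_, he⟩
    refine Finset.mem_filter.2 ⟨Finset.mem_powerset.2 (filter_Lay _ _), ?_, ?_⟩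
    · rw [← fiber_iff hm h _ (filter_Lay _ _), he]; exact hc
    · rw [he]; exact hQ

/-- Potential holes. -/
def Gd (m : ℕ) (R : Finset (Finset (Fin (2 * m)))) : Finset (Finset (Fin (2 * m))) :=
  (Lay (2 * m) (m + 1)).filter (fun x => x ∉ R ∧ ∀ y ⊆ x, y.card = m → y ∉ CB m R)

lemma hole_of {m : ℕ} (R S : Finset (Finset (Fin (2 * m)))) (hS : S ⊆ Lay (2 * m) m) :
    Zc m (Gd m R) S ≤ (Finset.univ.filter (fun x : Finset (Fin (2 * m)) =>
      IsHole (R ∪ ((S \ CB m R) ∪ CA m R)) m x)).card := by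
  refine Finset.card_le_card ?_
  intro x hx
  obtain ⟨hx, hxS⟩ := Finset.mem_filter.1 hx
  obtain ⟨hxL, hxR, hxB⟩ := Finset.mem_filter.1 hx
  have hxc := mem_Lay.1 hxL
  refine Finset.mem_filter.2 ⟨Finset.mem_univ _, hxc, ?_, ?_⟩
  · intro hh
    rcases Finset.mem_union.1 hh with h1 | h1
    · exact hxR h1
    rcases Finset.mem_union.1 h1 with h1 | h1
    · have := mem_Lay.1 (hS (Finset.mem_sdiff.1 h1).1); omega
    · have := (mem_CA.1 h1).1; omega
  · intro y hyx hy
    refine Finset.mem_union_right _ (Finset.mem_union_left _ (Finset.mem_sdiff.2 ⟨?_, hxB y hyx hy⟩))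
    exact hxS (Finset.mem_powersetCard.2 ⟨hyx, hy⟩)

lemma Gd_card {m : ℕ} (R : Finset (Finset (Fin (2 * m)))) :
    (2 * m).choose (m + 1) ≤ (Gd m R).card + ((CA m R).card + (CB m R).card) * m := by
  rw [← card_Lay]
  have : Lay (2 * m) (m + 1) ⊆ Gd m R ∪ (CA m R ∪ CB m R).biUnion
      (fun y => (Lay (2 * m) (m + 1)).filter (fun x => y ⊆ x)) := by
    intro x hx
    by_cases hG : x ∈ Gd m R
    · exact Finset.mem_union_left _ hG
    apply Finset.mem_union_right
    have hxc := mem_Lay.1 hx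
    by_cases hxR : x ∈ R
    · obtain ⟨y, hyx, hy⟩ := Finset.exists_subset_card_eq (show m ≤ x.card by omega)
      exact Finset.mem_biUnion.2 ⟨y, Finset.mem_union_left _ (mem_CA.2 ⟨hy, x, hxR, hxc, hyx⟩),
        Finset.mem_filter.2 ⟨hx, hyx⟩⟩
    · have : ∃ y ⊆ x, y.card = m ∧ y ∈ CB m R := by
        by_contra hne
        push Not at hne
        exact hG (Finset.mem_filter.2 ⟨hx, hxR, hne⟩)
      obtain ⟨y, hyx, _, hyB⟩ := this
      exact Finset.mem_biUnion.2 ⟨y, Finset.mem_union_right _ hyB, Finset.mem_filter.2 ⟨hx, hyx⟩⟩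
  refine (Finset.card_le_card this).trans ((Finset.card_union_le _ _).trans ?_)
  refine Nat.add_le_add_left ?_ _
  refine (Finset.card_biUnion_le_card_mul _ _ m ?_).trans
    (Nat.mul_le_mul_right _ (Finset.card_union_le _ _))
  intro y hy
  have hyc : y.card = m := by
    rcases Finset.mem_union.1 hy with h | h
    · exact (mem_CA.1 h).1
    · exact (mem_CB.1 h).1
  rw [card_up y hyc]; omega


lemma mem_all {n : ℕ} {Δ : Finset (Finset (Fin n))} : Δ ∈ allComplexes n ↔ IsComplex Δ := by
  simp [allComplexes]

/-- Number of constrained middle-layer sets. -/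
def aC (m : ℕ) (Δ : Finset (Finset (Fin (2 * m)))) : ℕ :=
  (CB m (restF m Δ)).card + (CA m (restF m Δ)).card

lemma fiber_size {m : ℕ} (hm : 2 ≤ m) {Δ : Finset (Finset (Fin (2 * m)))} (h : IsComplex Δ) :
    ((allComplexes (2 * m)).filter (fun Δ' => restF m Δ' = restF m Δ)).card * 2 ^ aC m Δ =
      2 ^ ((2 * m).choose m) := by
  have := fiber_card hm h (fun _ => True)
  simp only [and_true, Finset.filter_true, Finset.card_powerset, card_Lay] at this
  exact this

lemma all_ge {m : ℕ} (hm : 2 ≤ m) : 2 ^ ((2 * m).choose m) ≤ (allComplexes (2 * m)).card := by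
  set Δ : Finset (Finset (Fin (2 * m))) :=
    Finset.univ.filter (fun x => x.Nonempty ∧ x.card < m) with hΔ
  have h : IsComplex Δ := by
    constructor
    · intro x hx; exact (Finset.mem_filter.1 hx).2.1
    · intro x hx y hy hyx
      have h2 := (Finset.mem_filter.1 hx).2.2
      exact Finset.mem_filter.2 ⟨Finset.mem_univ _, hy, (Finset.card_le_card hyx).trans_lt h2⟩
  have hA : CA m (restF m Δ) = ∅ := by
    rw [Finset.eq_empty_iff_forall_notMem]
    intro x hx
    obtain ⟨_, y, hy, hyc, _⟩ := mem_CA.1 hx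
    simp only [restF, hΔ, Finset.mem_filter] at hy
    omega
  have hB : CB m (restF m Δ) = ∅ := by
    rw [Finset.eq_empty_iff_forall_notMem]
    intro x hx
    obtain ⟨_, z, _, hz, hne, hzR⟩ := mem_CB.1 hx
    apply hzR
    simp only [restF, hΔ, Finset.mem_filter, Finset.mem_univ, true_and]
    exact ⟨⟨hne, by omega⟩, by omega⟩
  have := fiber_size hm h
  simp only [aC, hA, hB, Finset.card_empty, add_zero, pow_zero, mul_one] at this
  rw [← this]
  exact Finset.card_le_card (Finset.filter_subset _ _)

lemma bad_bound {m : ℕ} (hm : 2 ≤ m) (L : ℝ) :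
    (((allComplexes (2 * m)).filter (fun Δ => L < aC m Δ)).card : ℝ) ≤
      2 ^ ((2 * m).choose m) * ((2 : ℝ) ^ (-(1 / (4 * (m : ℝ)) * L)) *
        SU (2 * m) (m + 1) (1 - 1 / (4 * (m : ℝ))) ^ 2) := by
  set θ : ℝ := 1 / (4 * (m : ℝ)) with hθ
  have hθ0 : 0 ≤ θ := by positivity
  set B := (allComplexes (2 * m)).filter (fun Δ => L < aC m Δ) with hB
  set f : Finset (Finset (Fin (2 * m))) → ℝ := fun A =>
    (2 : ℝ) ^ (-((1 - θ) * ((sh (m + 1) A).card : ℝ))) with hf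
  have hf0 : ∀ A, 0 ≤ f A := fun A => by rw [hf]; positivity
  rw [Finset.card_eq_sum_card_image (restF m) B, Nat.cast_sum]
  have h1 : ∀ R ∈ B.image (restF m), (((B.filter (fun Δ => restF m Δ = R)).card : ℕ) : ℝ) ≤
      2 ^ ((2 * m).choose m) * ((2 : ℝ) ^ (-(θ * L)) * (f (upF m R) * f (lowF m R))) := by
    intro R hR
    obtain ⟨Δ, hΔ, rfl⟩ := Finset.mem_image.1 hR
    obtain ⟨hc, hL⟩ := Finset.mem_filter.1 hΔ
    have hc := mem_all.1 hc
    have e := fiber_size hm hc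
    have e' : (((allComplexes (2 * m)).filter (fun Δ' => restF m Δ' = restF m Δ)).card : ℝ) *
      2 ^ aC m Δ = 2 ^ ((2 * m).choose m) := by exact_mod_cast e
    have e2 : (((B.filter (fun Δ' => restF m Δ' = restF m Δ)).card : ℕ) : ℝ) ≤
        ((allComplexes (2 * m)).filter (fun Δ' => restF m Δ' = restF m Δ)).card := by
      exact_mod_cast Finset.card_le_card
        (Finset.filter_subset_filter _ (Finset.filter_subset _ _))
    refine e2.trans ?_
    have hfa : (2 : ℝ) ^ (-(θ * (aC m Δ : ℝ))) *
        (f (upF m (restF m Δ)) * f (lowF m (restF m Δ))) * 2 ^ aC m Δ = 1 := by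
      simp only [hf]
      rw [sh_upF, ← card_CB, ← Real.rpow_natCast 2 (aC m Δ), ← Real.rpow_add two_pos,
        ← Real.rpow_add two_pos, ← Real.rpow_add two_pos]
      have : (aC m Δ : ℝ) = (CB m (restF m Δ)).card + (CA m (restF m Δ)).card := by
        simp [aC]
      rw [this, ← Real.rpow_zero 2]
      congr 1; ring
    have hle : (2 : ℝ) ^ (-(θ * (aC m Δ : ℝ))) ≤ (2 : ℝ) ^ (-(θ * L)) := by
      apply Real.rpow_le_rpow_of_exponent_le (by norm_num)
      have := mul_le_mul_of_nonneg_left hL.le hθ0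
      linarith
    have hff : 0 ≤ f (upF m (restF m Δ)) * f (lowF m (restF m Δ)) := mul_nonneg (hf0 _) (hf0 _)
    have hpos : (0 : ℝ) < 2 ^ aC m Δ := by positivity
    calc (((allComplexes (2 * m)).filter (fun Δ' => restF m Δ' = restF m Δ)).card : ℝ)
        = 2 ^ ((2 * m).choose m) * ((2 : ℝ) ^ (-(θ * (aC m Δ : ℝ))) *
          (f (upF m (restF m Δ)) * f (lowF m (restF m Δ)))) := by
          rw [← e', mul_assoc, mul_comm (2 ^ aC m Δ), hfa, mul_one]
      _ ≤ _ := by gcongr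
  refine (Finset.sum_le_sum h1).trans ?_
  rw [← Finset.mul_sum, ← Finset.mul_sum]
  have h2 : ∑ R ∈ B.image (restF m), f (upF m R) * f (lowF m R) ≤
      SU (2 * m) (m + 1) (1 - θ) ^ 2 := by
    rw [sq]
    unfold SU
    rw [Finset.sum_mul_sum, ← Finset.sum_product']
    rw [← Finset.sum_image (s := B.image (restF m)) (g := fun R => (upF m R, lowF m R))
      (f := fun p => f p.1 * f p.2)]
    · refine Finset.sum_le_sum_of_subset_of_nonneg ?_ (fun p _ _ => mul_nonneg (hf0 _) (hf0 _))
      intro p hp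
      obtain ⟨R, hR, rfl⟩ := Finset.mem_image.1 hp
      obtain ⟨Δ, hΔ, rfl⟩ := Finset.mem_image.1 hR
      have hc := mem_all.1 (Finset.mem_filter.1 hΔ).1
      exact Finset.mem_product.2 ⟨upF_mem hc, lowF_mem hc⟩
    · intro R hR R' hR' he
      obtain ⟨Δ, hΔ, rfl⟩ := Finset.mem_image.1 hR
      obtain ⟨Δ', hΔ', rfl⟩ := Finset.mem_image.1 hR'
      have hc := mem_all.1 (Finset.mem_filter.1 hΔ).1
      have hc' := mem_all.1 (Finset.mem_filter.1 hΔ').1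
      have he := Prod.ext_iff.1 he
      exact restF_inj hc hc' he.1 he.2
  gcongr

/-- number of holes -/
def Hn (m : ℕ) (Δ : Finset (Finset (Fin (2 * m)))) : ℕ :=
  (Finset.univ.filter (fun x : Finset (Fin (2 * m)) => IsHole Δ m x)).card

lemma few_bound {m : ℕ} (hm : 2 ≤ m) (L K μ ε : ℝ) (hε : 0 < ε) (hε1 : ε ≤ 1) (hμ : 0 < μ)
    (hμL : μ * 2 ^ (m + 1) ≤ ((2 * m).choose (m + 1) : ℕ) - L * m) (hK : K ≤ (1 - ε) * μ) :
    (((allComplexes (2 * m)).filter (fun Δ => (aC m Δ : ℝ) ≤ L ∧ (Hn m Δ : ℝ) < K)).card : ℝ) ≤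
      3 / (ε ^ 2 * μ) * (allComplexes (2 * m)).card := by
  set A := allComplexes (2 * m) with hA
  set F := A.filter (fun Δ => (aC m Δ : ℝ) ≤ L ∧ (Hn m Δ : ℝ) < K) with hF
  have hFA : F ⊆ A := Finset.filter_subset _ _
  rw [Finset.card_eq_sum_card_fiberwise (f := restF m) (s := F) (t := A.image (restF m))
    (fun Δ hΔ => Finset.mem_image_of_mem _ (hFA hΔ)),
    Finset.card_eq_sum_card_image (restF m) A, Nat.cast_sum, Nat.cast_sum, Finset.mul_sum]
  refine Finset.sum_le_sum fun R hR => ?_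
  obtain ⟨Δ, hΔ, rfl⟩ := Finset.mem_image.1 hR
  have hc := mem_all.1 hΔ
  by_cases haL : (aC m Δ : ℝ) ≤ L
  swap
  · have : F.filter (fun Δ' => restF m Δ' = restF m Δ) = ∅ := by
      rw [Finset.eq_empty_iff_forall_notMem]
      intro Δ' h'
      obtain ⟨h1, h2⟩ := Finset.mem_filter.1 h'
      have h3 := (Finset.mem_filter.1 h1).2.1
      have : aC m Δ' = aC m Δ := by simp only [aC, h2]
      rw [this] at h3; exact haL h3
    rw [this]; simp; positivity
  have e := fiber_size hm hc
  have e2 := fiber_card hm hc (fun Δ' => (Hn m Δ' : ℝ) < K)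
  have hsub : (F.filter (fun Δ' => restF m Δ' = restF m Δ)).card ≤
      (A.filter (fun Δ' => restF m Δ' = restF m Δ ∧ (Hn m Δ' : ℝ) < K)).card := by
    refine Finset.card_le_card ?_
    intro Δ' h'
    obtain ⟨h1, h2⟩ := Finset.mem_filter.1 h'
    exact Finset.mem_filter.2 ⟨hFA h1, h2, (Finset.mem_filter.1 h1).2.2⟩
  set G := Gd m (restF m Δ) with hG
  have hGc := Gd_card (restF m Δ)
  have hGμ : μ ≤ (G.card : ℝ) / 2 ^ (m + 1) := by
    rw [le_div_iff₀ (by positivity)]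
    have h1 : (((2 * m).choose (m + 1) : ℕ) : ℝ) ≤ G.card + (aC m Δ : ℝ) * m := by
      have : (2 * m).choose (m + 1) ≤ G.card + aC m Δ * m := by
        rw [aC, add_comm (CB m _).card]; exact hGc
      exact_mod_cast this
    have h2 := mul_le_mul_of_nonneg_right haL (Nat.cast_nonneg (α := ℝ) m)
    linarith
  set ν : ℝ := (G.card : ℝ) / 2 ^ (m + 1) with hν
  have hν0 : 0 < ν := hμ.trans_le hGμ
  have hch := cheb m G (Finset.filter_subset _ _) ε hε
  rw [← hν] at hch
  have hsub2 : ((Lay (2 * m) m).powerset.filter (fun S => (Hn m (restF m Δ ∪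
      ((S \ CB m (restF m Δ)) ∪ CA m (restF m Δ))) : ℝ) < K)).card ≤
      ((Lay (2 * m) m).powerset.filter (fun S => (Zc m G S : ℝ) < (1 - ε) * ν)).card := by
    refine Finset.card_le_card ?_
    intro S hS
    obtain ⟨hS, hlt⟩ := Finset.mem_filter.1 hS
    refine Finset.mem_filter.2 ⟨hS, ?_⟩
    have h1 : (Zc m G S : ℝ) ≤ _ :=
      Nat.cast_le.2 (hole_of (restF m Δ) S (Finset.mem_powerset.1 hS))
    have h2 : (1 - ε) * μ ≤ (1 - ε) * ν := mul_le_mul_of_nonneg_left hGμ (by linarith)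
    exact h1.trans_lt (hlt.trans_le (hK.trans h2))
  set X := ((Lay (2 * m) m).powerset.filter (fun S => (Zc m G S : ℝ) < (1 - ε) * ν)).card with hX
  have h3 : (X : ℝ) ≤ 3 / (ε ^ 2 * μ) * 2 ^ ((2 * m).choose m) := by
    have h4 : (X : ℝ) * (ε ^ 2 * ν) ≤ 3 * 2 ^ ((2 * m).choose m) := by
      refine le_of_mul_le_mul_right ?_ hν0
      calc _ = (X : ℝ) * (ε ^ 2 * ν ^ 2) := by ring
        _ ≤ _ := hch
        _ = _ := by ring
    have h5 : (X : ℝ) * (ε ^ 2 * μ) ≤ 3 * 2 ^ ((2 * m).choose m) := by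
      refine le_trans ?_ h4
      gcongr
    rw [div_mul_eq_mul_div, le_div_iff₀ (by positivity)]
    exact h5
  have e2' : ((A.filter (fun Δ' => restF m Δ' = restF m Δ ∧ (Hn m Δ' : ℝ) < K)).card : ℝ) *
      2 ^ aC m Δ ≤ X := by
    have := e2.le.trans hsub2
    exact_mod_cast this
  have e' : ((A.filter (fun Δ' => restF m Δ' = restF m Δ)).card : ℝ) *
      2 ^ aC m Δ = 2 ^ ((2 * m).choose m) := by exact_mod_cast e
  refine le_of_mul_le_mul_right ?_ (show (0 : ℝ) < 2 ^ aC m Δ by positivity)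
  rw [mul_assoc, e']
  refine le_trans ?_ (e2'.trans h3)
  have : ((F.filter (fun Δ' => restF m Δ' = restF m Δ)).card : ℝ) ≤
    (A.filter (fun Δ' => restF m Δ' = restF m Δ ∧ (Hn m Δ' : ℝ) < K)).card := by
    exact_mod_cast hsub
  gcongr


lemma choose_stirling (m : ℕ) (hm : m ≠ 0) :
    (((2 * m).choose m : ℕ) : ℝ) * Real.sqrt (Real.pi * m) / 4 ^ m =
      Real.sqrt Real.pi * Stirling.stirlingSeq (2 * m) / Stirling.stirlingSeq m ^ 2 := by
  have hmR : (0 : ℝ) < m := by positivity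
  have h1 : (((2 * m).choose m : ℕ) : ℝ) = ((2 * m).factorial : ℝ) / ((m.factorial : ℝ) ^ 2) := by
    rw [Nat.cast_choose ℝ (by omega : m ≤ 2 * m)]
    rw [show 2 * m - m = m by omega, sq]
  have hs : Real.sqrt (2 * ((2 * m : ℕ) : ℝ)) = 2 * Real.sqrt m := by
    rw [show (2 * ((2 * m : ℕ) : ℝ)) = 2 ^ 2 * m by push_cast; ring,
      Real.sqrt_mul (by positivity), Real.sqrt_sq (by norm_num)]
  have hs2 : Real.sqrt (2 * (m : ℝ)) ^ 2 = 2 * m := Real.sq_sqrt (by positivity)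
  have hs3 : Real.sqrt (m : ℝ) ^ 2 = m := Real.sq_sqrt (by positivity)
  have hsm : 0 < Real.sqrt (m : ℝ) := Real.sqrt_pos.2 hmR
  have he : (0 : ℝ) < m / Real.exp 1 := by positivity
  have hp : (((2 * m : ℕ) : ℝ) / Real.exp 1) ^ (2 * m) = 4 ^ m * ((m / Real.exp 1) ^ m) ^ 2 := by
    rw [show (((2 * m : ℕ) : ℝ) / Real.exp 1) = 2 * (m / Real.exp 1) by push_cast; ring,
      mul_pow, pow_mul, pow_mul']
    norm_num
  unfold Stirling.stirlingSeq
  have hy : (0 : ℝ) < ((m : ℝ) / Real.exp 1) ^ m := by positivity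
  have hf : (0 : ℝ) < m.factorial := by positivity
  rw [h1, hs, hp, Real.sqrt_mul Real.pi_pos.le]
  have hs4 : 0 < Real.sqrt (2 * (m : ℝ)) := Real.sqrt_pos.2 (by positivity)
  have hT : (0 : ℝ) < 4 ^ m := by positivity
  have key : Real.sqrt (2 * (m : ℝ)) ^ 2 = 2 * Real.sqrt (m : ℝ) ^ 2 := by rw [hs2, hs3]
  generalize ((m : ℝ) / Real.exp 1) ^ m = y at *
  generalize Real.sqrt (2 * (m : ℝ)) = s at *
  generalize Real.sqrt (m : ℝ) = r at *
  generalize (4 : ℝ) ^ m = T at *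
  generalize Real.sqrt Real.pi = p at *
  rw [div_pow, mul_pow, key]
  field_simp

lemma tend_choose : Filter.Tendsto (fun m : ℕ =>
    (((2 * m).choose m : ℕ) : ℝ) * Real.sqrt (Real.pi * m) / 4 ^ m) Filter.atTop (nhds 1) := by
  have h1 := Stirling.tendsto_stirlingSeq_sqrt_pi
  have h2 : Filter.Tendsto (fun m : ℕ => 2 * m) Filter.atTop Filter.atTop :=
    Filter.tendsto_id.const_mul_atTop' two_pos
  have hpi : (0 : ℝ) < Real.sqrt Real.pi := Real.sqrt_pos.2 Real.pi_pos
  have h3 := ((h1.comp h2).const_mul (Real.sqrt Real.pi)).div (h1.pow 2) (by positivity)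
  rw [show Real.sqrt Real.pi * Real.sqrt Real.pi / Real.sqrt Real.pi ^ 2 = 1 by
    field_simp] at h3
  refine h3.congr' ?_
  filter_upwards [Filter.eventually_ne_atTop 0] with m hm
  rw [choose_stirling m hm]; rfl

lemma tend_ratio : Filter.Tendsto (fun m : ℕ => (((2 * m).choose m : ℕ) : ℝ) / (m : ℝ) ^ 3)
    Filter.atTop Filter.atTop := by
  have h := tendsto_pow_const_div_const_pow_of_one_lt 4 (show (1 : ℝ) < 4 by norm_num)
  have h2 : Filter.Tendsto (fun m : ℕ => ((m : ℝ) ^ 4 / 4 ^ m)⁻¹) Filter.atTop Filter.atTop := by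
    refine Filter.Tendsto.inv_tendsto_nhdsGT_zero ?_
    refine tendsto_nhdsWithin_iff.2 ⟨h, ?_⟩
    filter_upwards [Filter.eventually_gt_atTop 0] with m hm
    have : (0 : ℝ) < m := by exact_mod_cast hm
    exact Set.mem_Ioi.2 (by positivity)
  refine Filter.tendsto_atTop_mono' _ ?_ h2
  filter_upwards [Filter.eventually_ge_atTop 4] with m hm
  have hmR : (0 : ℝ) < m := by exact_mod_cast (by omega : 0 < m)
  have h3 := Nat.four_pow_lt_mul_centralBinom m hm
  rw [Nat.centralBinom_eq_two_mul_choose] at h3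
  have h4 : (4 : ℝ) ^ m ≤ m * ((2 * m).choose m : ℕ) := by exact_mod_cast h3.le
  rw [inv_div, div_le_div_iff₀ (by positivity) (by positivity)]
  calc (4 : ℝ) ^ m * m ^ 3 ≤ m * ((2 * m).choose m : ℕ) * m ^ 3 := by gcongr
    _ = _ := by ring

lemma tend_small : Filter.Tendsto (fun m : ℕ =>
    2 * (m : ℝ) ^ 4 * (m + 2) * (2 : ℝ) ^ (-(m : ℝ) / 8)) Filter.atTop (nhds 0) := by
  have hr : (1 : ℝ) < (2 : ℝ) ^ ((1 : ℝ) / 8) := Real.one_lt_rpow (by norm_num) (by norm_num)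
  have h5 := tendsto_pow_const_div_const_pow_of_one_lt 5 hr
  have h4 := tendsto_pow_const_div_const_pow_of_one_lt 4 hr
  have h := (h5.const_mul 2).add (h4.const_mul 4)
  simp only [mul_zero, add_zero] at h
  refine h.congr fun m => ?_
  have : (2 : ℝ) ^ (-(m : ℝ) / 8) = (((2 : ℝ) ^ ((1 : ℝ) / 8)) ^ m)⁻¹ := by
    rw [← Real.rpow_natCast, ← Real.rpow_mul (by norm_num), ← Real.rpow_neg (by norm_num)]
    congr 1; ring
  rw [this]; ring

/-- upper bound for the probability of being atypical -/
def bF (m : ℕ) : ℝ := (2 : ℝ) ^ (-(1 / (4 * (m : ℝ)) * ((((2 * m).choose m : ℕ) : ℝ) / (m : ℝ) ^ 2))) *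
  SU (2 * m) (m + 1) (1 - 1 / (4 * (m : ℝ))) ^ 2

lemma SU_nonneg (n k : ℕ) (c : ℝ) : 0 ≤ SU n k c := by
  unfold SU; exact Finset.sum_nonneg fun _ _ => by positivity

lemma bF_le (m : ℕ) (hm : 1 ≤ m) : bF m ≤ Real.exp (-((((2 * m).choose m : ℕ) : ℝ) / (m : ℝ) ^ 3 *
    (Real.log 2 / 4 - 2 * (m : ℝ) ^ 4 * (m + 2) * (2 : ℝ) ^ (-(m : ℝ) / 8)))) := by
  have h := SU_bound m hm m le_rfl
  rw [show 2 * m + 1 - m = m + 1 by omega] at h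
  have hmR : (0 : ℝ) < m := by exact_mod_cast (by omega : 0 < m)
  unfold bF
  have h2 := pow_le_pow_left₀ (SU_nonneg _ _ _) h 2
  refine (mul_le_mul_of_nonneg_left h2 (by positivity)).trans (le_of_eq ?_)
  rw [Real.rpow_def_of_pos two_pos, ← pow_mul, ← Real.exp_nat_mul, ← Real.exp_add]
  congr 1
  push_cast
  field_simp
  ring

lemma tend_bF : Filter.Tendsto bF Filter.atTop (nhds 0) := by
  have hlog : (0 : ℝ) < Real.log 2 / 4 - 0 := by
    have := Real.log_pos (show (1 : ℝ) < 2 by norm_num); linarith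
  have h1 := tend_ratio.atTop_mul_pos hlog (tendsto_const_nhds.sub tend_small)
  have h2 := Real.tendsto_exp_neg_atTop_nhds_zero.comp h1
  refine tendsto_of_tendsto_of_tendsto_of_le_of_le' tendsto_const_nhds h2 ?_ ?_
  · exact Filter.Eventually.of_forall fun m => by
      have := SU_nonneg (2 * m) (m + 1) (1 - 1 / (4 * (m : ℝ)))
      unfold bF; positivity
  · filter_upwards [Filter.eventually_ge_atTop 1] with m hm
    exact bF_le m hm

/-- target scale -/
def sF (m : ℕ) : ℝ := (2 : ℝ) ^ m / (2 * Real.sqrt (Real.pi * m))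

def muF (m : ℕ) : ℝ := ((((2 * m).choose (m + 1) : ℕ) : ℝ) -
  (((2 * m).choose m : ℕ) : ℝ) / (m : ℝ) ^ 2 * m) / 2 ^ (m + 1)

lemma scale_eq (m : ℕ) (ε : ℝ) :
    (1 - ε) * (2 : ℝ) ^ (((2 * m : ℝ) - 1) / 2) / Real.sqrt (Real.pi * (2 * m)) =
      (1 - ε) * sF m := by
  have h1 : (2 : ℝ) ^ (((2 * m : ℝ) - 1) / 2) = 2 ^ m / Real.sqrt 2 := by
    rw [show (((2 * m : ℝ) - 1) / 2) = (m : ℝ) - 1 / 2 by ring, Real.rpow_sub two_pos,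
      Real.rpow_natCast, Real.sqrt_eq_rpow]
  rw [h1, show Real.pi * (2 * (m : ℝ)) = 2 * (Real.pi * m) by ring, Real.sqrt_mul (by norm_num), sF]
  have h2 : Real.sqrt 2 * Real.sqrt 2 = (2 : ℝ) := Real.mul_self_sqrt (by norm_num)
  rw [mul_div_assoc, div_div, ← mul_assoc, h2]

lemma sF_pos (m : ℕ) (hm : 1 ≤ m) : 0 < sF m := by
  have hmR : (0 : ℝ) < m := by exact_mod_cast (by omega : 0 < m)
  have := Real.pi_pos
  unfold sF; positivity

lemma muF_eq (m : ℕ) (hm : 1 ≤ m) : muF m =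
    ((((2 * m).choose m : ℕ) : ℝ) * Real.sqrt (Real.pi * m) / 4 ^ m *
      ((m : ℝ) / (m + 1) - 1 / m)) * sF m := by
  have hmR : (0 : ℝ) < m := by exact_mod_cast (by omega : 0 < m)
  have hq : 0 < Real.sqrt (Real.pi * m) := Real.sqrt_pos.2 (by positivity)
  have h := Nat.choose_succ_right_eq (2 * m) m
  rw [show 2 * m - m = m by omega] at h
  have h' : (((2 * m).choose (m + 1) : ℕ) : ℝ) = ((2 * m).choose m : ℕ) * (m / (m + 1)) := by
    rw [mul_div_assoc', eq_div_iff (by positivity)]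
    exact_mod_cast h
  unfold muF sF
  rw [h', show (4 : ℝ) ^ m = 2 ^ m * 2 ^ m by rw [← mul_pow]; norm_num, pow_succ (2 : ℝ) m]
  have ht : (0 : ℝ) < 2 ^ m := by positivity
  generalize (2 : ℝ) ^ m = t at *
  generalize Real.sqrt (Real.pi * m) = q at *
  field_simp

lemma tend_sF : Filter.Tendsto sF Filter.atTop Filter.atTop := by
  have h := tendsto_pow_const_div_const_pow_of_one_lt 1 (show (1 : ℝ) < 2 by norm_num)
  have h2 : Filter.Tendsto (fun m : ℕ => ((m : ℝ) ^ 1 / 2 ^ m)⁻¹) Filter.atTop Filter.atTop := by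
    refine Filter.Tendsto.inv_tendsto_nhdsGT_zero ?_
    refine tendsto_nhdsWithin_iff.2 ⟨h, ?_⟩
    filter_upwards [Filter.eventually_gt_atTop 0] with m hm
    have : (0 : ℝ) < m := by exact_mod_cast hm
    exact Set.mem_Ioi.2 (by positivity)
  have h3 := h2.atTop_div_const (show (0 : ℝ) < 4 by norm_num)
  refine Filter.tendsto_atTop_mono' _ ?_ h3
  filter_upwards [Filter.eventually_ge_atTop 1] with m hm
  have hmR : (1 : ℝ) ≤ m := by exact_mod_cast hm
  have hpi := Real.pi_pos
  have hq : Real.sqrt (Real.pi * m) ≤ 2 * m := by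
    rw [Real.sqrt_le_left (by positivity)]
    nlinarith [Real.pi_le_four]
  have hq0 : 0 < Real.sqrt (Real.pi * m) := Real.sqrt_pos.2 (by positivity)
  unfold sF
  rw [inv_div, pow_one, div_div]
  exact div_le_div_of_nonneg_left (by positivity) (by positivity) (by linarith)

lemma tend_q : Filter.Tendsto (fun m : ℕ => (((2 * m).choose m : ℕ) : ℝ) *
    Real.sqrt (Real.pi * m) / 4 ^ m * ((m : ℝ) / (m + 1) - 1 / m)) Filter.atTop (nhds 1) := by
  have h1 := tendsto_natCast_div_add_atTop (1 : ℝ)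
  have h2 := tendsto_one_div_atTop_nhds_zero_nat (𝕜 := ℝ)
  have := tend_choose.mul (h1.sub h2)
  simpa using this

theorem main_aux (ε : ℝ) (hε : 0 < ε) :
    Filter.Tendsto (fun m : ℕ =>
      uniformProb (2 * m) (fun Δ => (1 - ε) * sF m ≤ (Hn m Δ : ℝ))) Filter.atTop (nhds 1) := by
  obtain ⟨δ, hδ0, hδ1, hδε⟩ : ∃ δ : ℝ, 0 < δ ∧ δ ≤ 1 / 2 ∧ 2 * δ ≤ ε :=
    ⟨min ε 1 / 2, by positivity, by linarith [min_le_right ε 1], by linarith [min_le_left ε 1]⟩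
  have hq1 : ∀ᶠ m : ℕ in Filter.atTop, (1 - 2 * δ) * sF m ≤ (1 - δ) * muF m ∧
      sF m / 2 ≤ muF m := by
    have ha := (tend_q.const_mul (1 - δ)).eventually_const_lt
      (show 1 - 2 * δ < (1 - δ) * 1 by linarith)
    have hb := tend_q.eventually_const_lt (show (1 / 2 : ℝ) < 1 by norm_num)
    filter_upwards [ha, hb, Filter.eventually_ge_atTop 1] with m h1 h2 hm
    have hs := sF_pos m hm
    rw [muF_eq m hm]
    constructor
    · rw [← mul_assoc]; exact mul_le_mul_of_nonneg_right h1.le hs.le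
    · have := mul_le_mul_of_nonneg_right h2.le hs.le
      linarith
  have hlow : Filter.Tendsto (fun m : ℕ => 1 - (bF m + 6 / δ ^ 2 * (sF m)⁻¹))
      Filter.atTop (nhds 1) := by
    have := (tendsto_const_nhds (x := (1 : ℝ))).sub
      (tend_bF.add (tend_sF.inv_tendsto_atTop.const_mul (6 / δ ^ 2)))
    simpa using this
  refine tendsto_of_tendsto_of_tendsto_of_le_of_le' hlow tendsto_const_nhds ?_ ?_
  · filter_upwards [hq1, Filter.eventually_ge_atTop 2] with m ⟨h1, h2⟩ hm
    have hs := sF_pos m (by omega)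
    have hμ : 0 < muF m := by linarith
    set L : ℝ := (((2 * m).choose m : ℕ) : ℝ) / (m : ℝ) ^ 2 with hL
    set K : ℝ := (1 - ε) * sF m with hK
    have hKle : K ≤ (1 - δ) * muF m := by
      refine le_trans ?_ h1
      exact mul_le_mul_of_nonneg_right (by linarith) hs.le
    have hfew := few_bound hm L K (muF m) δ hδ0 (by linarith) hμ
      (le_of_eq (by rw [muF, div_mul_cancel₀ _ (by positivity)])) hKle
    have hbad := bad_bound hm L
    rw [hL] at hbad
    have hall : (2 : ℝ) ^ ((2 * m).choose m) ≤ (allComplexes (2 * m)).card := by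
      exact_mod_cast all_ge hm
    have hpos : (0 : ℝ) < (allComplexes (2 * m)).card := lt_of_lt_of_le (by positivity) hall
    have hb0 : 0 ≤ bF m := by
      have := SU_nonneg (2 * m) (m + 1) (1 - 1 / (4 * (m : ℝ)))
      unfold bF; positivity
    have hbad2 : (((allComplexes (2 * m)).filter (fun Δ => L < aC m Δ)).card : ℝ) ≤
        bF m * (allComplexes (2 * m)).card := by
      refine hbad.trans ?_
      change 2 ^ ((2 * m).choose m) * bF m ≤ _
      rw [mul_comm]
      exact mul_le_mul_of_nonneg_left hall hb0
    have hcov : (allComplexes (2 * m)).card ≤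
        ((allComplexes (2 * m)).filter (fun Δ => K ≤ (Hn m Δ : ℝ))).card +
        (((allComplexes (2 * m)).filter (fun Δ => L < aC m Δ)).card +
        ((allComplexes (2 * m)).filter (fun Δ => (aC m Δ : ℝ) ≤ L ∧ (Hn m Δ : ℝ) < K)).card) := by
      refine le_trans (Finset.card_le_card ?_) ((Finset.card_union_le _ _).trans
        (Nat.add_le_add_left (Finset.card_union_le _ _) _))
      intro Δ hΔ
      simp only [Finset.mem_union, Finset.mem_filter, hΔ, true_and]
      rcases le_or_gt K (Hn m Δ : ℝ) with h | h
      · exact Or.inl h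
      rcases lt_or_ge L (aC m Δ : ℝ) with h' | h'
      · exact Or.inr (Or.inl h')
      · exact Or.inr (Or.inr ⟨h', h⟩)
    have hcov' : ((allComplexes (2 * m)).card : ℝ) ≤
        ((allComplexes (2 * m)).filter (fun Δ => K ≤ (Hn m Δ : ℝ))).card +
        ((((allComplexes (2 * m)).filter (fun Δ => L < aC m Δ)).card : ℝ) +
        ((allComplexes (2 * m)).filter (fun Δ => (aC m Δ : ℝ) ≤ L ∧ (Hn m Δ : ℝ) < K)).card) := by
      exact_mod_cast hcov
    have hη : 3 / (δ ^ 2 * muF m) ≤ 6 / δ ^ 2 * (sF m)⁻¹ := by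
      rw [← div_eq_mul_inv, div_div, div_le_div_iff₀ (by positivity) (by positivity)]
      have : 0 < δ ^ 2 := by positivity
      nlinarith
    have hη2 := mul_le_mul_of_nonneg_right hη hpos.le
    unfold uniformProb
    rw [le_div_iff₀ hpos]
    linarith
  · refine Filter.Eventually.of_forall fun m => ?_
    unfold uniformProb
    refine div_le_one_of_le₀ ?_ (by positivity)
    exact_mod_cast Finset.card_le_card (Finset.filter_subset _ _)


/-- For `Δ ~ U(n)` with `n` even, with high probability the number of holes of
size `n/2 + 1` is at least `(1-ε)·2^{(n-1)/2}/√(πn)`. -/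
theorem stmt5 (ε : ℝ) (hε : 0 < ε) :
    Filter.Tendsto (fun m : ℕ =>
      uniformProb (2 * m) (fun Δ =>
        (1 - ε) * (2 : ℝ) ^ (((2 * m : ℝ) - 1) / 2) / Real.sqrt (Real.pi * (2 * m)) ≤
          ((Finset.univ.filter (fun x : Finset (Fin (2 * m)) => IsHole Δ m x)).card : ℝ)))
      Filter.atTop (nhds 1) := by
  have h := main_aux ε hε
  refine h.congr fun m => ?_
  rw [← scale_eq m ε]
  rfl
end
end
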